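/- arXiv:2506.15611 — 2 statements merged into one kernel-verified Lean document; each statement's English description precedes it below -/
import Mathlib

section
/- Let u be a positive solution of div(|x|^{-2a}∇u) + |x|^{-bp} u^{p-1} = 0 in ℝ^d, with a,b satisfying the admissibility conditions, and let 𝐩 := (n-1) w^{-2/(n-2)} be the associated pressure function. Then on (0,∞) × S^{d-1} one has the divergence identity 𝐩^{1-n} 𝐤[𝐩] = D_i( (1/2) 𝐩^{1-n} D_i|D𝐩|² − (1/n) 𝐩^{1-n} (𝓛𝐩) D_i 𝐩 ). -/
/-!
The proof rests on the pointwise equation satisfied by the pressure `𝐩` away from the origin,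

  `𝐩 𝓛𝐩 = (n/2) |D𝐩|² + C`,  `C = 2 (n-1)² / (n-2)`.

Expanding the two divergences by the Leibniz rule, the difference between the two sides of the
identity is a multiple of `𝐩^{-n} ⟨D𝐩, D(½|D𝐩|² - (1/n) 𝐩 𝓛𝐩)⟩`, which vanishes because the
function being differentiated is constant (`divergence_identity_of_eq`).

The pressure equation comes from two computations. The substitution `u(r, θ) = w(r^α, θ)`, that is
`u(x) = w(|x|^{α-1} x)`, turns the weighted equation for `u` into `-𝓛w = w^{p-1}`
(`eLap_comp_stretch`, `divg_weighted_gradient`, `cylL_eq_of_solution`); the values of `α`, `n` and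
`p` are exactly those for which the first-order coefficients and the powers of `r` match. The chain
rule `𝓛 f(w) = f'(w) 𝓛w + f''(w) |Dw|²` (`cylL_comp`) with `f(s) = (n-1) s^{-2/(n-2)}` then gives
the equation for `𝐩` (`pressure_equation`).

This requires `α ≠ 0`, i.e. `b < a + 1`. When `b = a + 1` the hypothesis on `w` forces `u` to be
homogeneous of degree `0`, and no positive solution exists: at a minimum of `u` on the sphere the
Laplacian is nonnegative and the gradient vanishes, while the zeroth-order term of the equation is
positive (`no_homogeneous_solution`).

Throughout, the angular parts are eliminated in favour of Cartesian derivatives: `⟨Dφ, Dψ⟩` is the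
derivative of `φ` along `∇ψ + (α² - 1) ψ' x/|x|` (`cylInnerD_eq`), and `𝓛` is the Laplacian plus
radial corrections (`cylL_eq`).
-/

open Real MeasureTheory Metric
open scoped RealInnerProductSpace

noncomputable section

/-- `ℝ^d` with the Euclidean structure. -/
abbrev Euc (d : ℕ) := EuclideanSpace ℝ (Fin d)

/-- Divergence of a vector field on `ℝ^d`. -/
def divg {d : ℕ} (F : Euc d → Euc d) (x : Euc d) : ℝ :=
  ∑ i, ⟪fderiv ℝ F x (EuclideanSpace.single i 1), EuclideanSpace.single i 1⟫

/-- The critical parameter `a_c = (d-2)/2`. -/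
def acrit (d : ℕ) : ℝ := ((d : ℝ) - 2) / 2

/-- The CKN exponent `p = 2d/(d-2+2(b-a))`. -/
def pCKN (d : ℕ) (a b : ℝ) : ℝ := 2 * d / ((d : ℝ) - 2 + 2 * (b - a))

/-- The auxiliary parameter `α = (1+a-b)(a_c-a)/(a_c-a+b)`. -/
def alphaCKN (d : ℕ) (a b : ℝ) : ℝ := (1 + a - b) * (acrit d - a) / (acrit d - a + b)

/-- The intrinsic dimension `n = d/(1+a-b)`. -/
def nCKN (d : ℕ) (a b : ℝ) : ℝ := (d : ℝ) / (1 + a - b)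

/-- The admissibility conditions on `a, b`:
`a ≤ b ≤ a+1` if `d ≥ 3`, `a < b ≤ a+1` if `d = 2`, and `a < a_c`. -/
def Admissible (d : ℕ) (a b : ℝ) : Prop :=
  ((3 ≤ d ∧ a ≤ b ∧ b ≤ a + 1) ∨ (d = 2 ∧ a < b ∧ b ≤ a + 1)) ∧ a < acrit d

/-- `p ∈ (2, 2^*)` where `2^* = 2d/(d-2)` for `d ≥ 3` (and `2^* = +∞` for `d = 2`). -/
def PInCriticalRange (d : ℕ) (p : ℝ) : Prop :=
  2 < p ∧ (3 ≤ d → p < 2 * d / ((d : ℝ) - 2))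

/-- `u` is a (classical, away from the origin) solution of
`div(|x|^{-2a} ∇u) + |x|^{-bp} u^{p-1} = 0` in `ℝ^d`. -/
def IsCKNSolution (d : ℕ) (a b p : ℝ) (u : Euc d → ℝ) : Prop :=
  ContDiffOn ℝ (⊤ : ℕ∞) u {(0 : Euc d)}ᶜ ∧
    ∀ x : Euc d, x ≠ 0 →
      divg (fun y => (‖y‖ ^ (-(2 * a)) : ℝ) • gradient u y) x
        + ‖x‖ ^ (-(b * p)) * u x ^ (p - 1) = 0

/-- The explicit radial solution `𝒰`. -/
def UCKN (d : ℕ) (a b : ℝ) (x : Euc d) : ℝ :=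
  ((d : ℝ) * (pCKN d a b - 2) * (acrit d - a) ^ 2 / (1 + a - b)) ^ (1 / (pCKN d a b - 2)) *
    (1 + ‖x‖ ^ ((pCKN d a b - 2) * (acrit d - a))) ^ (-2 / (pCKN d a b - 2))

/-- `u` coincides with `𝒰` up to the scaling invariance `u ↦ λ^{a_c-a} u(λ ·)`. -/
def IsSolitonBubble (d : ℕ) (a b : ℝ) (u : Euc d → ℝ) : Prop :=
  ∃ lam : ℝ, 0 < lam ∧ ∀ x : Euc d, u x = lam ^ (acrit d - a) * UCKN d a b (lam • x)

/-- Membership in the local space `D^{a,b}_loc(ℝ^d)`. -/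
def MemDLoc (d : ℕ) (a b p : ℝ) (u : Euc d → ℝ) : Prop :=
  ∀ R : ℝ, 0 < R →
    IntegrableOn (fun x : Euc d => |u x| ^ p * ‖x‖ ^ (-(b * p))) (ball 0 R) volume ∧
      IntegrableOn (fun x : Euc d => ‖x‖ ^ (-(2 * a)) * ‖gradient u x‖ ^ 2) (ball 0 R) volume

/-- Membership in the energy space `D^{a,b}(ℝ^d)`. -/
def MemD (d : ℕ) (a b p : ℝ) (u : Euc d → ℝ) : Prop :=
  Integrable (fun x : Euc d => |u x| ^ p * ‖x‖ ^ (-(b * p))) volume ∧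
    Integrable (fun x : Euc d => ‖x‖ ^ (-(2 * a)) * ‖gradient u x‖ ^ 2) volume

/- Cylinder `(0,∞) × S^{d-1}` objects.  A function on the cylinder is identified with a
function on `ℝ^d \ {0}` via `(r,θ) ↦ rθ`; the angular derivatives are expressed through
the standard Euclidean decomposition in spherical coordinates. -/

/-- Radial derivative `v'` (i.e. `∂_r`) in spherical coordinates. -/
def rD {d : ℕ} (V : Euc d → ℝ) (x : Euc d) : ℝ := fderiv ℝ V x (‖x‖⁻¹ • x)

/-- Second radial derivative `v''`. -/
def rD2 {d : ℕ} (V : Euc d → ℝ) (x : Euc d) : ℝ := rD (rD V) x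

/-- The Euclidean Laplacian on `ℝ^d`. -/
def eLap {d : ℕ} (V : Euc d → ℝ) (x : Euc d) : ℝ :=
  ∑ i, fderiv ℝ (fun y => fderiv ℝ V y (EuclideanSpace.single i 1)) x (EuclideanSpace.single i 1)

/-- `Δ_θ V / r²`, via the decomposition `Δ = ∂_rr + (d-1)/r ∂_r + Δ_θ/r²`. -/
def sphLapR2 {d : ℕ} (V : Euc d → ℝ) (x : Euc d) : ℝ :=
  eLap V x - rD2 V x - ((d : ℝ) - 1) / ‖x‖ * rD V x

/-- The operator `𝓛v = α² v'' + α²(n-1) v'/r + Δ_θ v/r²`. -/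
def cylL {d : ℕ} (α n : ℝ) (V : Euc d → ℝ) (x : Euc d) : ℝ :=
  α ^ 2 * rD2 V x + α ^ 2 * (n - 1) / ‖x‖ * rD V x + sphLapR2 V x

/-- `∇_θ V / r`, realized as the tangential part of the Euclidean gradient. -/
def tGrad {d : ℕ} (V : Euc d → ℝ) (x : Euc d) : Euc d :=
  gradient V x - rD V x • (‖x‖⁻¹ • x)

/-- `|Dv|² = α² |v'|² + |∇_θ v|²/r²`. -/
def cylGradSq {d : ℕ} (α : ℝ) (V : Euc d → ℝ) (x : Euc d) : ℝ :=
  α ^ 2 * rD V x ^ 2 + ‖tGrad V x‖ ^ 2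

/-- `⟨Dv, Dq⟩ = α² v' q' + ∇_θ v · ∇_θ q / r²`. -/
def cylInnerD {d : ℕ} (α : ℝ) (V Q : Euc d → ℝ) (x : Euc d) : ℝ :=
  α ^ 2 * rD V x * rD Q x + ⟪tGrad V x, tGrad Q x⟫

/-- The Bochner quantity `𝐤[𝐩] = ½ 𝓛|D𝐩|² − ⟨D𝐩, D𝓛𝐩⟩ − (1/n)(𝓛𝐩)²`. -/
def bochK {d : ℕ} (α n : ℝ) (V : Euc d → ℝ) (x : Euc d) : ℝ :=
  (1 / 2) * cylL α n (cylGradSq α V) x - cylInnerD α V (cylL α n V) x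
    - (1 / n) * cylL α n V x ^ 2

/-- The divergence `D_i (φ D_i ψ)` of the field `φ Dψ`, expressed via the Leibniz rule
`D_i(φ D_i ψ) = ⟨Dφ, Dψ⟩ + φ 𝓛ψ`. -/
def cylDivFD {d : ℕ} (α n : ℝ) (φ ψ : Euc d → ℝ) (x : Euc d) : ℝ :=
  cylInnerD α φ ψ x + φ x * cylL α n ψ x

/-- Integral over the cylinder `(0,∞)×S^{d-1}` with respect to `dμ = r^{n-1} dr dθ`,
i.e. the weighted integral `∫ f(x) |x|^{n-d} dx` on `ℝ^d`. -/
def cylIntegral {d : ℕ} (n : ℝ) (f : Euc d → ℝ) : ℝ :=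
  ∫ x : Euc d, f x * ‖x‖ ^ (n - (d : ℝ))

/-- Integral over `(0,R)×S^{d-1}` with respect to `dμ = r^{n-1} dr dθ`. -/
def cylIntegralBall {d : ℕ} (n : ℝ) (R : ℝ) (f : Euc d → ℝ) : ℝ :=
  ∫ x in ball (0 : Euc d) R, f x * ‖x‖ ^ (n - (d : ℝ))

/-- `W` is the cylinder representation `w` of `u`, i.e. `u(r,θ) = w(r^α, θ)`. -/
def IsCylinderRep {d : ℕ} (α : ℝ) (u W : Euc d → ℝ) : Prop :=
  ContDiffOn ℝ (⊤ : ℕ∞) W {(0 : Euc d)}ᶜ ∧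
    ∀ x : Euc d, x ≠ 0 → u x = W ((‖x‖ ^ (α - 1) : ℝ) • x)

/-- The pressure function `𝐩 = (n-1) w^{-2/(n-2)}`. -/
def pressure {d : ℕ} (n : ℝ) (W : Euc d → ℝ) (x : Euc d) : ℝ :=
  (n - 1) * W x ^ (-(2 / (n - 2)))

/-- A nonnegative smooth function of the radial variable, compactly supported in `(0,∞)`. -/
def IsCutoff (η : ℝ → ℝ) : Prop :=
  ContDiff ℝ (⊤ : ℕ∞) η ∧ HasCompactSupport η ∧ tsupport η ⊆ Set.Ioi 0 ∧ ∀ r : ℝ, 0 ≤ η r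

namespace PressureIdentity

variable {d : ℕ}

/-! ### Smoothness and radial derivatives on the punctured space -/

lemma isOpen_punctured : IsOpen ({(0 : Euc d)}ᶜ : Set (Euc d)) := isOpen_compl_singleton

lemma eventually_ne {x : Euc d} (hx : x ≠ 0) : ∀ᶠ y in nhds x, y ≠ 0 :=
  isOpen_punctured.eventually_mem hx

lemma differentiableAt_of {V : Euc d → ℝ} (hV : ContDiffOn ℝ (⊤ : ℕ∞) V {(0 : Euc d)}ᶜ)
    {x : Euc d} (hx : x ≠ 0) : DifferentiableAt ℝ V x :=
  (hV.contDiffAt (isOpen_punctured.mem_nhds hx)).differentiableAt (by simp)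

lemma contDiffOn_fderiv {V : Euc d → ℝ} (hV : ContDiffOn ℝ (⊤ : ℕ∞) V {(0 : Euc d)}ᶜ) :
    ContDiffOn ℝ (⊤ : ℕ∞) (fderiv ℝ V) {(0 : Euc d)}ᶜ :=
  hV.fderiv_of_isOpen isOpen_punctured (by exact le_rfl)

lemma differentiableAt_fderiv {V : Euc d → ℝ} (hV : ContDiffOn ℝ (⊤ : ℕ∞) V {(0 : Euc d)}ᶜ)
    {x : Euc d} (hx : x ≠ 0) : DifferentiableAt ℝ (fderiv ℝ V) x :=
  ((contDiffOn_fderiv hV).contDiffAt (isOpen_punctured.mem_nhds hx)).differentiableAt (by simp)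

lemma contDiffOn_partial {V : Euc d → ℝ} (hV : ContDiffOn ℝ (⊤ : ℕ∞) V {(0 : Euc d)}ᶜ)
    (v : Euc d) : ContDiffOn ℝ (⊤ : ℕ∞) (fun y => fderiv ℝ V y v) {(0 : Euc d)}ᶜ :=
  (contDiffOn_fderiv hV).clm_apply contDiffOn_const

lemma contDiffOn_norm : ContDiffOn ℝ (⊤ : ℕ∞) (fun y : Euc d => ‖y‖) {(0 : Euc d)}ᶜ :=
  contDiffOn_id.norm ℝ (fun _ hx => hx)

lemma contDiffOn_dir :
    ContDiffOn ℝ (⊤ : ℕ∞) (fun y : Euc d => ‖y‖⁻¹ • y) {(0 : Euc d)}ᶜ :=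
  (contDiffOn_norm.inv (fun _ hx => norm_ne_zero_iff.2 hx)).smul contDiffOn_id

lemma contDiffOn_rD {V : Euc d → ℝ} (hV : ContDiffOn ℝ (⊤ : ℕ∞) V {(0 : Euc d)}ᶜ) :
    ContDiffOn ℝ (⊤ : ℕ∞) (rD V) {(0 : Euc d)}ᶜ :=
  (contDiffOn_fderiv hV).clm_apply contDiffOn_dir

lemma hasFDerivAt_norm_rpow_of_ne (β : ℝ) {x : Euc d} (hx : x ≠ 0) :
    HasFDerivAt (fun y : Euc d => ‖y‖ ^ β) ((β * ‖x‖ ^ (β - 2)) • innerSL ℝ x) x := by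
  have hx' : 0 < ‖x‖ := norm_pos_iff.2 hx
  have h := ((hasFDerivAt_id x).norm_sq).rpow_const (p := β / 2) (Or.inl (by simpa using hx))
  have e : (fun y : Euc d => ‖y‖ ^ β) = fun y : Euc d => (‖id y‖ ^ 2) ^ (β / 2) := by
    funext y
    rw [← Real.rpow_natCast, ← Real.rpow_mul (norm_nonneg _)]
    simp
    congr 1
    ring
  rw [e]
  refine HasFDerivAt.congr_fderiv h ?_
  ext v
  have : (‖x‖ ^ 2) ^ (β / 2 - 1) = ‖x‖ ^ (β - 2) := by
    rw [← Real.rpow_natCast, ← Real.rpow_mul (norm_nonneg _)]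
    congr 1
    push_cast
    ring
  simp [this]
  ring

/-- The unit radial vector is stationary in the radial direction. -/
lemma fderiv_dir_radial {x : Euc d} (hx : x ≠ 0) :
    fderiv ℝ (fun y : Euc d => ‖y‖⁻¹ • y) x (‖x‖⁻¹ • x) = 0 := by
  have hx' : 0 < ‖x‖ := norm_pos_iff.2 hx
  have h := (hasFDerivAt_norm_rpow_of_ne (-1) hx).smul (hasFDerivAt_id x)
  have e : (fun y : Euc d => ‖y‖⁻¹ • y) = fun y : Euc d => (‖y‖ ^ (-1 : ℝ)) • id y := by
    funext y
    simp [Real.rpow_neg_one]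
  have h3 : ‖x‖ ^ (-1 - 2 : ℝ) = (‖x‖ ^ 3)⁻¹ := by
    rw [show (-1 - 2 : ℝ) = -((3 : ℕ) : ℝ) by norm_num, Real.rpow_neg (norm_nonneg _),
      Real.rpow_natCast]
  rw [e]
  erw [h.fderiv]
  have h4 : ‖x‖⁻¹ * ((‖x‖ ^ 3)⁻¹ * ‖x‖ ^ 2) = ‖x‖⁻¹ * ‖x‖⁻¹ := by field_simp
  simp [h3, Real.rpow_neg_one, smul_smul, h4]

/-- On smooth functions the iterated radial derivative is the Hessian evaluated twice on the unit
radial vector. -/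
lemma rD2_eq {V : Euc d → ℝ} (hV : ContDiffOn ℝ (⊤ : ℕ∞) V {(0 : Euc d)}ᶜ)
    {x : Euc d} (hx : x ≠ 0) :
    rD2 V x = fderiv ℝ (fderiv ℝ V) x (‖x‖⁻¹ • x) (‖x‖⁻¹ • x) := by
  have h1 := (differentiableAt_fderiv hV hx).hasFDerivAt
  have h2 := ((contDiffOn_dir.contDiffAt (isOpen_punctured.mem_nhds hx)).differentiableAt
    (by simp)).hasFDerivAt
  have h := (h1.clm_apply h2).fderiv
  have e : rD V = fun y => fderiv ℝ V y (‖y‖⁻¹ • y) := rfl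
  unfold rD2
  rw [e]
  unfold rD
  rw [h]
  rw [add_apply, ContinuousLinearMap.comp_apply, fderiv_dir_radial hx, map_zero, zero_add,
    ContinuousLinearMap.flip_apply]

lemma fderiv_partial {V : Euc d → ℝ} (hV : ContDiffOn ℝ (⊤ : ℕ∞) V {(0 : Euc d)}ᶜ)
    {x : Euc d} (hx : x ≠ 0) (v w : Euc d) :
    fderiv ℝ (fun y => fderiv ℝ V y v) x w = fderiv ℝ (fderiv ℝ V) x w v := by
  have h1 := (differentiableAt_fderiv hV hx).hasFDerivAt
  rw [(h1.clm_apply (hasFDerivAt_const v x)).fderiv]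
  simp

lemma sum_coord (x : Euc d) : ∑ i, x i • EuclideanSpace.single i (1 : ℝ) = x := by
  simpa using (EuclideanSpace.basisFun (Fin d) ℝ).sum_repr x

lemma sum_coord_apply (x : Euc d) (T : Euc d →L[ℝ] ℝ) :
    ∑ i, x i * T (EuclideanSpace.single i 1) = T x := by
  conv_rhs => rw [← sum_coord x]
  simp

lemma sum_coord_sq (x : Euc d) : ∑ i, x i * x i = ‖x‖ ^ 2 := by
  rw [EuclideanSpace.real_norm_sq_eq]
  simp [sq]

lemma fderiv_radial (V : Euc d → ℝ) {x : Euc d} (hx : x ≠ 0) :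
    fderiv ℝ V x x = ‖x‖ * rD V x := by
  have hx' : ‖x‖ ≠ 0 := norm_ne_zero_iff.2 hx
  simp [rD, hx']

/-! ### The cylindrical gradient and Laplacian in Cartesian form -/

/-- The cylindrical gradient pairing as a directional derivative along
`∇ψ + (α² - 1) ψ' x/|x|`. -/
lemma cylInnerD_eq (α : ℝ) (φ ψ : Euc d → ℝ) {x : Euc d} (hx : x ≠ 0) :
    cylInnerD α φ ψ x =
      fderiv ℝ φ x (gradient ψ x + ((α ^ 2 - 1) * rD ψ x) • (‖x‖⁻¹ • x)) := by
  have hx' : ‖x‖ ≠ 0 := norm_ne_zero_iff.2 hx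
  have he : ⟪‖x‖⁻¹ • x, ‖x‖⁻¹ • x⟫ = (1 : ℝ) := by
    rw [real_inner_self_eq_norm_sq, norm_smul]
    simp [hx']
  have hψ : ⟪‖x‖⁻¹ • x, gradient ψ x⟫ = rD ψ x := by
    rw [real_inner_comm]
    exact inner_gradient_left
  have hr : fderiv ℝ φ x (‖x‖⁻¹ • x) = rD φ x := rfl
  rw [map_add, map_smul, hr]
  unfold cylInnerD tGrad
  generalize ‖x‖⁻¹ • x = e at *
  simp only [inner_sub_left, inner_sub_right, real_inner_smul_left, real_inner_smul_right, he,
    hψ, inner_gradient_left, smul_eq_mul, map_smul, hr]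
  ring

lemma cylInnerD_comm (α : ℝ) (φ ψ : Euc d → ℝ) (x : Euc d) :
    cylInnerD α φ ψ x = cylInnerD α ψ φ x := by
  unfold cylInnerD
  rw [real_inner_comm]
  ring

lemma cylGradSq_eq (α : ℝ) (V : Euc d → ℝ) (x : Euc d) :
    cylGradSq α V x = cylInnerD α V V x := by
  unfold cylGradSq cylInnerD
  rw [real_inner_self_eq_norm_sq]
  ring

lemma contDiffOn_gradient {V : Euc d → ℝ} (hV : ContDiffOn ℝ (⊤ : ℕ∞) V {(0 : Euc d)}ᶜ) :
    ContDiffOn ℝ (⊤ : ℕ∞) (gradient V) {(0 : Euc d)}ᶜ :=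
  (InnerProductSpace.toDual ℝ (Euc d)).symm.contDiff.comp_contDiffOn (contDiffOn_fderiv hV)

lemma contDiffOn_cylGradSq (α : ℝ) {V : Euc d → ℝ}
    (hV : ContDiffOn ℝ (⊤ : ℕ∞) V {(0 : Euc d)}ᶜ) :
    ContDiffOn ℝ (⊤ : ℕ∞) (cylGradSq α V) {(0 : Euc d)}ᶜ := by
  have hr := contDiffOn_rD hV
  have ht : ContDiffOn ℝ (⊤ : ℕ∞) (tGrad V) {(0 : Euc d)}ᶜ :=
    (contDiffOn_gradient hV).sub (hr.smul contDiffOn_dir)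
  exact (contDiffOn_const.mul (hr.pow 2)).add (ht.norm_sq ℝ)

lemma cylL_eq (α n : ℝ) (V : Euc d → ℝ) (x : Euc d) :
    cylL α n V x = eLap V x + (α ^ 2 - 1) * rD2 V x
      + (α ^ 2 * (n - 1) - ((d : ℝ) - 1)) / ‖x‖ * rD V x := by
  unfold cylL sphLapR2
  ring

/-! ### The change of variables `(r, θ) ↦ (r^α, θ)` -/

/-- The radial stretching `(r, θ) ↦ (r^α, θ)`, written in Cartesian form. -/
def stretch (α : ℝ) (x : Euc d) : Euc d := (‖x‖ ^ (α - 1) : ℝ) • x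

lemma stretch_ne (α : ℝ) {x : Euc d} (hx : x ≠ 0) : stretch α x ≠ 0 :=
  smul_ne_zero (Real.rpow_pos_of_pos (norm_pos_iff.2 hx) _).ne' hx

lemma norm_stretch (α : ℝ) (x : Euc d) : ‖stretch α x‖ = ‖x‖ ^ (α - 1) * ‖x‖ := by
  rw [stretch, norm_smul, Real.norm_of_nonneg (Real.rpow_nonneg (norm_nonneg _) _)]

lemma stretch_dir (α : ℝ) {x : Euc d} (hx : x ≠ 0) :
    ‖stretch α x‖⁻¹ • stretch α x = ‖x‖⁻¹ • x := by
  have h := (Real.rpow_pos_of_pos (norm_pos_iff.2 hx) (α - 1)).ne'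
  rw [norm_stretch α x, stretch, smul_smul]
  congr 1
  field_simp

/-- The stretchings form a multiplicative group, so each one with `α ≠ 0` is onto the punctured
space. -/
lemma exists_stretch_eq {α : ℝ} (hα : α ≠ 0) {y : Euc d} (hy : y ≠ 0) :
    ∃ x : Euc d, x ≠ 0 ∧ stretch α x = y := by
  have hy' : 0 < ‖y‖ := norm_pos_iff.2 hy
  refine ⟨stretch α⁻¹ y, stretch_ne _ hy, ?_⟩
  unfold stretch
  rw [norm_smul, Real.norm_of_nonneg (Real.rpow_nonneg (norm_nonneg _) _), smul_smul]
  conv_lhs => enter [1, 1, 1, 2]; rw [← Real.rpow_one ‖y‖]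
  rw [← Real.rpow_add hy', ← Real.rpow_mul hy'.le, ← Real.rpow_add hy',
    show (α⁻¹ - 1 + 1) * (α - 1) + (α⁻¹ - 1) = 0 by field_simp; ring]
  simp

lemma rpow_sub_natCast' {r : ℝ} (hr : 0 < r) (β : ℝ) (k : ℕ) : r ^ (β - k) = r ^ β / r ^ k := by
  rw [Real.rpow_sub hr, Real.rpow_natCast]

/-- Derivative of the stretching: the tangential part is scaled by `r^(α-1)`, the radial part
by `α r^(α-1)`. -/
lemma hasFDerivAt_stretch (α : ℝ) {x : Euc d} (hx : x ≠ 0) :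
    HasFDerivAt (stretch α) ((‖x‖ ^ (α - 1)) • ContinuousLinearMap.id ℝ (Euc d)
      + ((((α - 1) * ‖x‖ ^ (α - 1 - 2)) • innerSL ℝ x).smulRight x)) x :=
  (hasFDerivAt_norm_rpow_of_ne (α - 1) hx).smul (hasFDerivAt_id x)

lemma differentiableAt_comp_stretch (α : ℝ) {V : Euc d → ℝ}
    (hV : ContDiffOn ℝ (⊤ : ℕ∞) V {(0 : Euc d)}ᶜ) {x : Euc d} (hx : x ≠ 0) :
    DifferentiableAt ℝ (fun y => V (stretch α y)) x :=
  (differentiableAt_of hV (stretch_ne α hx)).comp x (hasFDerivAt_stretch α hx).differentiableAt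

/-- Chain rule for the stretching: the radial derivative picks up the extra factor `α`. -/
lemma fderiv_comp_stretch (α : ℝ) {V : Euc d → ℝ}
    (hV : ContDiffOn ℝ (⊤ : ℕ∞) V {(0 : Euc d)}ᶜ) {x : Euc d} (hx : x ≠ 0) (v : Euc d) :
    fderiv ℝ (fun y => V (stretch α y)) x v =
      ‖x‖ ^ (α - 1) * (fderiv ℝ V (stretch α x) v
        + (α - 1) * (⟪x, v⟫ / ‖x‖) * rD V (stretch α x)) := by
  have hx' : 0 < ‖x‖ := norm_pos_iff.2 hx
  have h := ((differentiableAt_of hV (stretch_ne α hx)).hasFDerivAt.comp x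
    (hasFDerivAt_stretch α hx)).fderiv
  have e : (fun y => V (stretch α y)) = V ∘ stretch α := rfl
  have h2 : fderiv ℝ V (stretch α x) x = ‖x‖ * rD V (stretch α x) := by
    rw [rD, stretch_dir α hx]
    simp [hx'.ne']
  have h3 : ‖x‖ ^ (α - 1 - 2) = ‖x‖ ^ (α - 1) / ‖x‖ ^ 2 := by
    simpa using rpow_sub_natCast' hx' (α - 1) 2
  rw [e, h]
  simp [h2, h3]
  field_simp

lemma rD_comp_stretch (α : ℝ) {V : Euc d → ℝ}
    (hV : ContDiffOn ℝ (⊤ : ℕ∞) V {(0 : Euc d)}ᶜ) {x : Euc d} (hx : x ≠ 0) :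
    rD (fun y => V (stretch α y)) x = α * ‖x‖ ^ (α - 1) * rD V (stretch α x) := by
  have hx' : 0 < ‖x‖ := norm_pos_iff.2 hx
  have h : fderiv ℝ V (stretch α x) (‖x‖⁻¹ • x) = rD V (stretch α x) := by
    rw [rD, stretch_dir α hx]
  rw [rD, fderiv_comp_stretch α hV hx, h, real_inner_smul_right, real_inner_self_eq_norm_sq]
  field_simp
  ring

/-- Second partial derivative of `V ∘ stretch α`, arranged so that each term can be summed over `i`
by `∑ xᵢ T(eᵢ) = T x` or `∑ xᵢ² = |x|²`. -/
lemma partial2_comp_stretch (α : ℝ) {V : Euc d → ℝ}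
    (hV : ContDiffOn ℝ (⊤ : ℕ∞) V {(0 : Euc d)}ᶜ) {x : Euc d} (hx : x ≠ 0) (i : Fin d) :
    fderiv ℝ (fun z => fderiv ℝ (fun y => V (stretch α y)) z (EuclideanSpace.single i 1)) x
        (EuclideanSpace.single i 1) =
      (‖x‖ ^ (α - 1)) ^ 2 *
          fderiv ℝ (fun y => fderiv ℝ V y (EuclideanSpace.single i 1)) (stretch α x)
            (EuclideanSpace.single i 1)
      + ‖x‖ ^ (α - 1) * ((α - 1) / ‖x‖ ^ 2) *
          (x i * fderiv ℝ V (stretch α x) (EuclideanSpace.single i 1))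
      + (‖x‖ ^ (α - 1)) ^ 2 * ((α - 1) / ‖x‖) *
          (x i * fderiv ℝ (fderiv ℝ V) (stretch α x) (‖x‖⁻¹ • x) (EuclideanSpace.single i 1))
      + ‖x‖ ^ (α - 1) * ((α - 1) / ‖x‖) * rD V (stretch α x)
      + ‖x‖ ^ (α - 1) * ((α - 1) * (α - 2) / ‖x‖ ^ 3) * rD V (stretch α x) * (x i * x i)
      + (‖x‖ ^ (α - 1)) ^ 2 * ((α - 1) / ‖x‖) *
          (x i * fderiv ℝ (rD V) (stretch α x) (EuclideanSpace.single i 1))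
      + (‖x‖ ^ (α - 1)) ^ 2 * ((α - 1) ^ 2 / ‖x‖ ^ 2) * rD2 V (stretch α x) * (x i * x i) := by
  have hx' : 0 < ‖x‖ := norm_pos_iff.2 hx
  set e : Euc d := EuclideanSpace.single i 1 with he
  have hev : (fun z => fderiv ℝ (fun y => V (stretch α y)) z e) =ᶠ[nhds x]
      fun z => ‖z‖ ^ (α - 1) * fderiv ℝ V (stretch α z) e
        + ‖z‖ ^ (α - 2) * (((α - 1) * ⟪e, z⟫) * rD V (stretch α z)) := by
    filter_upwards [eventually_ne hx] with z hz
    have hz' : 0 < ‖z‖ := norm_pos_iff.2 hz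
    have h1 : ‖z‖ ^ (α - 2) = ‖z‖ ^ (α - 1) / ‖z‖ := by
      rw [show α - 2 = α - 1 - 1 by ring]
      simpa using rpow_sub_natCast' hz' (α - 1) 1
    rw [fderiv_comp_stretch α hV hz, h1, real_inner_comm]
    field_simp
  have hA := contDiffOn_partial hV e
  have hR := contDiffOn_rD hV
  have hlin : HasFDerivAt (fun z : Euc d => (α - 1) * ⟪e, z⟫) ((α - 1) • innerSL ℝ e) x :=
    ((innerSL ℝ e).hasFDerivAt (x := x)).const_mul (α - 1)
  have hd := ((hasFDerivAt_norm_rpow_of_ne (α - 1) hx).mul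
      (differentiableAt_comp_stretch α hA hx).hasFDerivAt).add
    ((hasFDerivAt_norm_rpow_of_ne (α - 2) hx).mul
      (hlin.mul (differentiableAt_comp_stretch α hR hx).hasFDerivAt))
  rw [hev.fderiv_eq]
  erw [hd.fderiv]
  have hin : ⟪x, e⟫ = x i := by simp [he, EuclideanSpace.inner_single_right]
  have hin' : ⟪e, x⟫ = x i := by rw [real_inner_comm, hin]
  have hee : ⟪e, e⟫ = (1 : ℝ) := by simp [he]
  have h1 : ‖x‖ ^ (α - 2) = ‖x‖ ^ (α - 1) / ‖x‖ := by
    rw [show α - 2 = α - 1 - 1 by ring]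
    simpa using rpow_sub_natCast' hx' (α - 1) 1
  have h2 : ‖x‖ ^ (α - 1 - 2) = ‖x‖ ^ (α - 1) / ‖x‖ ^ 2 := by
    simpa using rpow_sub_natCast' hx' (α - 1) 2
  have h3 : ‖x‖ ^ (α - 2 - 2) = ‖x‖ ^ (α - 1) / ‖x‖ ^ 3 := by
    rw [show α - 2 - 2 = α - 1 - (3 : ℕ) by push_cast; ring]
    exact rpow_sub_natCast' hx' (α - 1) 3
  have hrA : rD (fun y => fderiv ℝ V y e) (stretch α x)
      = fderiv ℝ (fderiv ℝ V) (stretch α x) (‖x‖⁻¹ • x) e := by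
    rw [rD, stretch_dir α hx, fderiv_partial hV (stretch_ne α hx)]
  have hrR : rD (rD V) (stretch α x) = rD2 V (stretch α x) := rfl
  simp only [Pi.mul_apply, add_apply, smul_apply, smul_eq_mul, fderiv_comp_stretch α hA hx,
    fderiv_comp_stretch α hR hx, innerSL_apply_apply, hin, hin', hee, h1, h2, h3, hrA, hrR]
  generalize ‖x‖ ^ (α - 1) = ρ
  field_simp
  ring

/-- The Laplacian of `V ∘ stretch α`: the radial second derivative acquires the factor `α²` that
appears in `𝓛`. -/
lemma eLap_comp_stretch (α : ℝ) {V : Euc d → ℝ}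
    (hV : ContDiffOn ℝ (⊤ : ℕ∞) V {(0 : Euc d)}ᶜ) {x : Euc d} (hx : x ≠ 0) :
    eLap (fun y => V (stretch α y)) x =
      (‖x‖ ^ (α - 1)) ^ 2 * (eLap V (stretch α x) + (α ^ 2 - 1) * rD2 V (stretch α x))
        + ‖x‖ ^ (α - 1) * ((α - 1) * (α + d - 1) / ‖x‖) * rD V (stretch α x) := by
  have hx' : 0 < ‖x‖ := norm_pos_iff.2 hx
  have hn := stretch_ne α hx
  have e1 : fderiv ℝ V (stretch α x) x = ‖x‖ * rD V (stretch α x) := by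
    rw [rD, stretch_dir α hx]
    simp [hx'.ne']
  have e2 : fderiv ℝ (rD V) (stretch α x) x = ‖x‖ * rD2 V (stretch α x) := by
    rw [rD2, rD, stretch_dir α hx]
    simp [hx'.ne']
  have e3 : fderiv ℝ (fderiv ℝ V) (stretch α x) (‖x‖⁻¹ • x) x = ‖x‖ * rD2 V (stretch α x) := by
    rw [rD2_eq hV hn, stretch_dir α hx]
    generalize fderiv ℝ (fderiv ℝ V) (stretch α x) (‖x‖⁻¹ • x) = T
    simp [hx'.ne']
  unfold eLap
  simp only [partial2_comp_stretch α hV hx, Finset.sum_add_distrib, ← Finset.mul_sum,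
    sum_coord_apply, sum_coord_sq, e1, e2, e3]
  simp only [Finset.sum_const, Finset.card_univ, Fintype.card_fin, nsmul_eq_mul]
  generalize ‖x‖ ^ (α - 1) = ρ
  field_simp
  ring

/-! ### The weighted divergence -/

/-- Expansion of the weighted divergence `div(|x|^{-2a} ∇u)` in terms of the Laplacian and the
radial derivative. -/
lemma divg_weighted_gradient (a : ℝ) {u : Euc d → ℝ}
    (hu : ContDiffOn ℝ (⊤ : ℕ∞) u {(0 : Euc d)}ᶜ) {x : Euc d} (hx : x ≠ 0) :
    divg (fun y => (‖y‖ ^ (-(2 * a)) : ℝ) • gradient u y) x =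
      ‖x‖ ^ (-(2 * a)) * (eLap u x - 2 * a / ‖x‖ * rD u x) := by
  have hx' : 0 < ‖x‖ := norm_pos_iff.2 hx
  have hw := hasFDerivAt_norm_rpow_of_ne (-(2 * a)) hx
  have hg := (((contDiffOn_gradient hu).contDiffAt
    (isOpen_punctured.mem_nhds hx)).differentiableAt (by simp)).hasFDerivAt
  have hF := hw.smul hg
  have h2 : ‖x‖ ^ (-(2 * a) - 2) = ‖x‖ ^ (-(2 * a)) / ‖x‖ ^ 2 := by
    simpa using rpow_sub_natCast' hx' (-(2 * a)) 2
  have key : ∀ i : Fin d, ⟪fderiv ℝ (fun y => (‖y‖ ^ (-(2 * a)) : ℝ) • gradient u y) x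
      (EuclideanSpace.single i 1), EuclideanSpace.single i 1⟫ =
      ‖x‖ ^ (-(2 * a)) * fderiv ℝ (fun y => fderiv ℝ u y (EuclideanSpace.single i 1)) x
          (EuclideanSpace.single i 1)
        + (-(2 * a) * ‖x‖ ^ (-(2 * a) - 2)) *
          (x i * fderiv ℝ u x (EuclideanSpace.single i 1)) := by
    intro i
    have hsec : fderiv ℝ (fun y => fderiv ℝ u y (EuclideanSpace.single i 1)) x
        (EuclideanSpace.single i 1)
        = ⟪fderiv ℝ (gradient u) x (EuclideanSpace.single i 1), EuclideanSpace.single i 1⟫ := by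
      have e : (fun y => fderiv ℝ u y (EuclideanSpace.single i 1))
          = fun y => ⟪gradient u y, EuclideanSpace.single i (1 : ℝ)⟫ := by
        funext y
        exact inner_gradient_left.symm
      rw [e, fderiv_inner_apply ℝ hg.differentiableAt (differentiableAt_const _)]
      simp
    have hin : ⟪x, EuclideanSpace.single i (1 : ℝ)⟫ = x i := by
      simp [EuclideanSpace.inner_single_right]
    have hgr : ⟪gradient u x, EuclideanSpace.single i (1 : ℝ)⟫
        = fderiv ℝ u x (EuclideanSpace.single i 1) := inner_gradient_left
    rw [hsec]
    erw [hF.fderiv]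
    simp only [add_apply, smul_apply, ContinuousLinearMap.smulRight_apply, inner_add_left,
      real_inner_smul_left, innerSL_apply_apply, smul_eq_mul, hin, hgr]
    ring
  unfold divg
  simp only [key, Finset.sum_add_distrib, ← Finset.mul_sum, sum_coord_apply]
  rw [fderiv_radial u hx, h2]
  unfold eLap
  field_simp
  ring

/-! ### Chain rule for the cylindrical Laplacian -/

/-- Chain rule for the cylindrical Laplacian: `𝓛 f(V) = f'(V) 𝓛V + f''(V) |DV|²`. -/
lemma cylL_comp (α n : ℝ) {V : Euc d → ℝ} (hV : ContDiffOn ℝ (⊤ : ℕ∞) V {(0 : Euc d)}ᶜ)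
    {f f₁ f₂ : ℝ → ℝ} (hf : ∀ y : Euc d, y ≠ 0 → HasDerivAt f (f₁ (V y)) (V y))
    (hf₁ : ∀ y : Euc d, y ≠ 0 → HasDerivAt f₁ (f₂ (V y)) (V y)) {x : Euc d} (hx : x ≠ 0) :
    cylL α n (fun y => f (V y)) x = f₁ (V x) * cylL α n V x + f₂ (V x) * cylGradSq α V x := by
  have h1 : ∀ y : Euc d, y ≠ 0 → ∀ v,
      fderiv ℝ (fun y => f (V y)) y v = f₁ (V y) * fderiv ℝ V y v := by
    intro y hy v
    have h := ((hf y hy).comp_hasFDerivAt y (differentiableAt_of hV hy).hasFDerivAt).fderiv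
    have e : (fun y => f (V y)) = f ∘ V := rfl
    rw [e, h]
    rfl
  -- The derivative of `f'(V) · G`, the common form of all the first derivatives of `f(V)`.
  have h2 : ∀ G : Euc d → ℝ, ContDiffOn ℝ (⊤ : ℕ∞) G {(0 : Euc d)}ᶜ → ∀ v,
      fderiv ℝ (fun y => f₁ (V y) * G y) x v
        = f₁ (V x) * fderiv ℝ G x v + f₂ (V x) * (G x * fderiv ℝ V x v) := by
    intro G hG v
    have h := (((hf₁ x hx).comp_hasFDerivAt x (differentiableAt_of hV hx).hasFDerivAt).mul
      (differentiableAt_of hG hx).hasFDerivAt).fderiv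
    have e : (fun y => f₁ (V y) * G y) = (f₁ ∘ V) * G := rfl
    rw [e, h]
    simp
    ring
  have hr : rD (fun y => f (V y)) x = f₁ (V x) * rD V x := h1 x hx _
  have hr2 : rD2 (fun y => f (V y)) x = f₁ (V x) * rD2 V x + f₂ (V x) * (rD V x * rD V x) := by
    have hev : rD (fun y => f (V y)) =ᶠ[nhds x] fun y => f₁ (V y) * rD V y := by
      filter_upwards [eventually_ne hx] with y hy using h1 y hy _
    rw [rD2, rD, hev.fderiv_eq, h2 _ (contDiffOn_rD hV)]
    rfl
  have hL : eLap (fun y => f (V y)) x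
      = f₁ (V x) * eLap V x + f₂ (V x) * fderiv ℝ V x (gradient V x) := by
    have key : ∀ i : Fin d,
        fderiv ℝ (fun z => fderiv ℝ (fun y => f (V y)) z (EuclideanSpace.single i 1)) x
          (EuclideanSpace.single i 1)
        = f₁ (V x) * fderiv ℝ (fun y => fderiv ℝ V y (EuclideanSpace.single i 1)) x
            (EuclideanSpace.single i 1)
          + f₂ (V x) * (gradient V x i * fderiv ℝ V x (EuclideanSpace.single i 1)) := by
      intro i
      have hev : (fun z => fderiv ℝ (fun y => f (V y)) z (EuclideanSpace.single i 1)) =ᶠ[nhds x]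
          fun z => f₁ (V z) * fderiv ℝ V z (EuclideanSpace.single i 1) := by
        filter_upwards [eventually_ne hx] with y hy using h1 y hy _
      have hg : fderiv ℝ V x (EuclideanSpace.single i 1) = gradient V x i := by
        rw [← inner_gradient_left, EuclideanSpace.inner_single_right]
        simp
      rw [hev.fderiv_eq, h2 _ (contDiffOn_partial hV _), hg]
    unfold eLap
    simp only [key, Finset.sum_add_distrib, ← Finset.mul_sum, sum_coord_apply]
  have hr' : fderiv ℝ V x (‖x‖⁻¹ • x) = rD V x := rfl
  rw [cylL_eq, cylL_eq, cylGradSq_eq, cylInnerD_eq _ _ _ hx, map_add, map_smul, hr', hr, hr2, hL,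
    smul_eq_mul]
  ring

/-! ### The divergence identity from the pressure equation -/

/-- A positive `q` for which `q 𝓛q - (n/2)|Dq|²` is constant satisfies the divergence identity:
the Leibniz rule reduces the claim to the vanishing of the derivative of that constant along
`Dq`. -/
lemma divergence_identity_of_eq (α n C : ℝ) (hn : n ≠ 0) {q : Euc d → ℝ}
    (hq : ContDiffOn ℝ (⊤ : ℕ∞) q {(0 : Euc d)}ᶜ) (hpos : ∀ y : Euc d, y ≠ 0 → 0 < q y)
    (h : ∀ y : Euc d, y ≠ 0 → q y * cylL α n q y = n / 2 * cylGradSq α q y + C)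
    {x : Euc d} (hx : x ≠ 0) :
    q x ^ (1 - n) * bochK α n q x =
      cylDivFD α n (fun y => (1 / 2) * q y ^ (1 - n)) (cylGradSq α q) x -
        cylDivFD α n (fun y => (1 / n) * q y ^ (1 - n) * cylL α n q y) q x := by
  have hqx := hpos x hx
  have hqd := (differentiableAt_of hq hx).hasFDerivAt
  have hFd := (differentiableAt_of (contDiffOn_cylGradSq α hq) hx).hasFDerivAt
  -- `𝓛q` is differentiable because the hypothesis expresses it through first derivatives of `q`.
  have hΛev : cylL α n q =ᶠ[nhds x] fun y => (n / 2 * cylGradSq α q y + C) * (q y)⁻¹ := by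
    filter_upwards [eventually_ne hx] with y hy
    rw [← h y hy, mul_comm (q y), mul_inv_cancel_right₀ (hpos y hy).ne']
  have hΛd := (hΛev.differentiableAt_iff.2
    (((hFd.differentiableAt.const_mul (n / 2)).add_const C).mul
      (hqd.differentiableAt.inv hqx.ne'))).hasFDerivAt
  have hpow := hqd.rpow_const (p := 1 - n) (Or.inl hqx.ne')
  have hZ : ∀ v : Euc d, q x * fderiv ℝ (cylL α n q) x v + cylL α n q x * fderiv ℝ q x v
      = n / 2 * fderiv ℝ (cylGradSq α q) x v := by
    intro v
    have hev : (q * cylL α n q) =ᶠ[nhds x] fun y => n / 2 * cylGradSq α q y + C := by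
      filter_upwards [eventually_ne hx] with y hy using h y hy
    have h1 := hev.fderiv_eq (𝕜 := ℝ)
    rw [(hqd.mul hΛd).fderiv, ((hFd.const_mul (n / 2)).add_const C).fderiv] at h1
    simpa using DFunLike.congr_fun h1 v
  have hkey : q x * cylInnerD α q (cylL α n q) x + cylL α n q x * cylGradSq α q x
      = n / 2 * cylInnerD α q (cylGradSq α q) x := by
    rw [cylInnerD_comm α q (cylL α n q), cylInnerD_comm α q (cylGradSq α q), cylGradSq_eq,
      cylInnerD_eq _ _ _ hx, cylInnerD_eq α q _ hx, cylInnerD_eq _ _ _ hx]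
    exact hZ _
  have hexp : q x ^ (1 - n - 1) = q x ^ (1 - n) / q x := by rw [Real.rpow_sub_one hqx.ne']
  have hA : cylInnerD α (fun y => (1 / 2) * q y ^ (1 - n)) (cylGradSq α q) x
      = (1 / 2) * ((1 - n) * (q x ^ (1 - n) / q x)) * cylInnerD α q (cylGradSq α q) x := by
    rw [cylInnerD_eq _ _ _ hx, cylInnerD_eq _ _ _ hx, (hpow.const_mul (1 / 2)).fderiv, hexp]
    simp only [smul_apply, smul_eq_mul]
    ring
  have hB : cylInnerD α (fun y => (1 / n) * q y ^ (1 - n) * cylL α n q y) q x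
      = (1 / n) * ((1 - n) * (q x ^ (1 - n) / q x)) * cylL α n q x * cylGradSq α q x
        + (1 / n) * q x ^ (1 - n) * cylInnerD α q (cylL α n q) x := by
    rw [cylInnerD_comm α q (cylL α n q), cylGradSq_eq, cylInnerD_eq _ _ _ hx,
      cylInnerD_eq α q _ hx, cylInnerD_eq _ _ _ hx]
    have hm := ((hpow.const_mul (1 / n)).mul hΛd).fderiv
    have e : (fun y => (1 / n) * q y ^ (1 - n) * cylL α n q y)
        = (fun y => (1 / n) * q y ^ (1 - n)) * cylL α n q := rfl
    rw [e, hm, hexp]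
    simp only [add_apply, smul_apply, smul_eq_mul]
    ring
  unfold cylDivFD bochK
  rw [hA, hB]
  have hI : cylInnerD α q (cylGradSq α q) x
      = 2 / n * (q x * cylInnerD α q (cylL α n q) x + cylL α n q x * cylGradSq α q x) := by
    rw [hkey]
    field_simp
  rw [hI]
  field_simp
  ring

/-! ### The endpoint `b = a + 1` -/

/-- A local minimum has nonnegative pure second derivatives. -/
lemma second_deriv_nonneg_of_isLocalMin {V : Euc d → ℝ}
    (hV : ContDiffOn ℝ (⊤ : ℕ∞) V {(0 : Euc d)}ᶜ) {x : Euc d} (hx : x ≠ 0)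
    (hmin : IsLocalMin V x) (v : Euc d) : 0 ≤ fderiv ℝ (fun y => fderiv ℝ V y v) x v := by
  by_contra! hneg
  have hline : ∀ t : ℝ, HasDerivAt (fun t : ℝ => x + t • v) v t := by
    intro t
    simpa using ((hasDerivAt_id t).smul_const v).const_add x
  have hcont : Filter.Tendsto (fun t : ℝ => x + t • v) (nhds 0) (nhds x) := by
    have := (hline 0).continuousAt.tendsto
    simpa using this
  have hne : ∀ᶠ t : ℝ in nhds 0, x + t • v ≠ 0 := hcont.eventually (eventually_ne hx)
  have hd1 : deriv (fun t : ℝ => V (x + t • v)) =ᶠ[nhds 0] fun t => fderiv ℝ V (x + t • v) v := by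
    filter_upwards [hne] with t ht
    exact ((differentiableAt_of hV ht).hasFDerivAt.comp_hasDerivAt t (hline t)).deriv
  have hd2 : deriv (deriv (fun t : ℝ => V (x + t • v))) 0
      = fderiv ℝ (fun y => fderiv ℝ V y v) x v := by
    rw [hd1.deriv_eq]
    have hx0 : x + (0 : ℝ) • v ≠ 0 := by simpa using hx
    have := ((differentiableAt_of (contDiffOn_partial hV v) hx0).hasFDerivAt.comp_hasDerivAt 0
      (hline 0)).deriv
    simpa [Function.comp_def] using this
  have hg0 : deriv (fun t : ℝ => V (x + t • v)) 0 = 0 := by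
    rw [hd1.eq_of_nhds]
    simp [hmin.fderiv_eq_zero]
  have hc : ContinuousAt (fun t : ℝ => V (x + t • v)) 0 := by
    refine ContinuousAt.comp (g := V) ?_ (hline 0).continuousAt
    simpa using (differentiableAt_of hV hx).continuousAt
  have hmax := isLocalMax_of_deriv_deriv_neg (by rw [hd2]; exact hneg) hg0 hc
  have hmin' : ∀ᶠ t : ℝ in nhds 0, V x ≤ V (x + t • v) := hcont.eventually hmin
  have hconst : (fun t : ℝ => V (x + t • v)) =ᶠ[nhds 0] fun _ => V x := by
    filter_upwards [hmax, hmin'] with t h1 h2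
    exact le_antisymm (by simpa using h1) h2
  have hz : deriv (deriv (fun t : ℝ => V (x + t • v))) 0 = 0 := by
    rw [hconst.deriv.deriv_eq]
    simp
  rw [hd2] at hz
  exact hneg.ne hz

/-- The endpoint `b = a + 1` (where `α = 0`) is vacuous: a solution would be a positive
0-homogeneous function with `Δ_θ u + u = 0` on the sphere, which is impossible at a minimum. -/
lemma no_homogeneous_solution (a : ℝ) (c p : ℝ) (hd : 0 < d) {u : Euc d → ℝ}
    (hu : ContDiffOn ℝ (⊤ : ℕ∞) u {(0 : Euc d)}ᶜ) (hupos : ∀ x : Euc d, 0 < u x)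
    (hhom : ∀ x : Euc d, x ≠ 0 → u x = u (‖x‖⁻¹ • x))
    (hsol : ∀ x : Euc d, x ≠ 0 →
      divg (fun y => (‖y‖ ^ (-(2 * a)) : ℝ) • gradient u y) x + ‖x‖ ^ c * u x ^ p = 0) :
    False := by
  have : Nonempty (Fin d) := ⟨⟨0, hd⟩⟩
  have hS : (sphere (0 : Euc d) 1).Nonempty := NormedSpace.sphere_nonempty.2 zero_le_one
  have hsub : sphere (0 : Euc d) 1 ⊆ {(0 : Euc d)}ᶜ := by
    intro y hy h0
    simp only [Set.mem_singleton_iff] at h0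
    simp [h0] at hy
  obtain ⟨x, hxS, hxmin⟩ := (isCompact_sphere (0 : Euc d) 1).exists_isMinOn hS
    (hu.continuousOn.mono hsub)
  have hx : x ≠ 0 := hsub hxS
  have hmin : IsLocalMin u x := by
    filter_upwards [eventually_ne hx] with y hy
    rw [hhom y hy]
    refine hxmin ?_
    simp [norm_smul, hy]
  have hlap : 0 ≤ eLap u x :=
    Finset.sum_nonneg fun i _ => second_deriv_nonneg_of_isLocalMin hu hx hmin _
  have hr : rD u x = 0 := by simp [rD, hmin.fderiv_eq_zero]
  have hx' : 0 < ‖x‖ := norm_pos_iff.2 hx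
  have h := hsol x hx
  rw [divg_weighted_gradient a hu hx, hr] at h
  have h1 : 0 < ‖x‖ ^ c * u x ^ p :=
    mul_pos (Real.rpow_pos_of_pos hx' _) (Real.rpow_pos_of_pos (hupos x) _)
  have h2 : 0 ≤ ‖x‖ ^ (-(2 * a)) * (eLap u x - 2 * a / ‖x‖ * 0) := by
    rw [mul_zero, sub_zero]
    exact mul_nonneg (Real.rpow_nonneg hx'.le _) hlap
  linarith

/-! ### The equations for `w` and for the pressure -/

/-- If `u = w ∘ stretch α` solves the weighted equation and the exponents are compatible, then
`-𝓛w = w^(p-1)`. -/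
lemma cylL_eq_of_solution {a b p α n : ℝ} (hα : α ≠ 0)
    (h1 : α * (n - 2) = (d : ℝ) - 2 - 2 * a) (h2 : 2 + 2 * a - b * p = 2 * α)
    {u W : Euc d → ℝ} (husol : IsCKNSolution d a b p u) (hW : IsCylinderRep α u W)
    {y : Euc d} (hy : y ≠ 0) : cylL α n W y = -(W y ^ (p - 1)) := by
  obtain ⟨x, hx, rfl⟩ := exists_stretch_eq hα hy
  have hx' : 0 < ‖x‖ := norm_pos_iff.2 hx
  obtain ⟨hu, hs⟩ := husol
  obtain ⟨hWs, hrep⟩ := hW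
  have hev : u =ᶠ[nhds x] fun y => W (stretch α y) := by
    filter_upwards [eventually_ne hx] with z hz using hrep z hz
  have hr : rD u x = rD (fun y => W (stretch α y)) x := by rw [rD, rD, hev.fderiv_eq]
  have hL : eLap u x = eLap (fun y => W (stretch α y)) x := by
    unfold eLap
    refine Finset.sum_congr rfl fun i _ => ?_
    have : (fun y => fderiv ℝ u y (EuclideanSpace.single i 1)) =ᶠ[nhds x]
        fun z => fderiv ℝ (fun y => W (stretch α y)) z (EuclideanSpace.single i 1) := by
      filter_upwards [hev.fderiv (𝕜 := ℝ)] with z hz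
      rw [hz]
    rw [this.fderiv_eq]
  have h := hs x hx
  rw [divg_weighted_gradient a hu hx, hr, hL, rD_comp_stretch α hWs hx,
    eLap_comp_stretch α hWs hx, hrep x hx] at h
  have hst : (‖x‖ ^ (α - 1) : ℝ) • x = stretch α x := rfl
  have hw : ‖x‖ ^ (-(b * p)) = ‖x‖ ^ (-(2 * a)) * (‖x‖ ^ (α - 1)) ^ 2 := by
    rw [← Real.rpow_natCast, ← Real.rpow_mul hx'.le, ← Real.rpow_add hx']
    congr 1
    push_cast
    linarith
  have hwpos := Real.rpow_pos_of_pos hx' (-(2 * a))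
  have hρ := Real.rpow_pos_of_pos hx' (α - 1)
  rw [hst, hw, mul_assoc _ ((‖x‖ ^ (α - 1)) ^ 2) (W (stretch α x) ^ (p - 1)), ← mul_add] at h
  have h' := (mul_eq_zero.1 h).resolve_left hwpos.ne'
  rw [cylL_eq, norm_stretch α x]
  generalize ‖x‖ ^ (α - 1) = ρ at *
  have hcoef : α ^ 2 * (n - 1) - ((d : ℝ) - 1) = (α - 1) * (α + d - 1) - 2 * a * α := by
    linear_combination α * h1
  rw [hcoef]
  have h3 : ρ ^ 2 * (eLap W (stretch α x) + (α ^ 2 - 1) * rD2 W (stretch α x)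
      + ((α - 1) * (α + d - 1) - 2 * a * α) / (ρ * ‖x‖) * rD W (stretch α x)
      + W (stretch α x) ^ (p - 1)) = 0 := by
    rw [← h']
    field_simp
    ring
  have h4 := (mul_eq_zero.1 h3).resolve_left (by positivity)
  linarith

/-- The equation `-𝓛w = w^(p-1)`, `p = 2n/(n-2)`, in terms of the pressure:
`𝐩 𝓛𝐩 = (n/2) |D𝐩|² + 2 (n-1)²/(n-2)`. -/
lemma pressure_equation (α : ℝ) {n p : ℝ} (hn : 2 < n) (hp : p = 2 * n / (n - 2))
    {W : Euc d → ℝ} (hWs : ContDiffOn ℝ (⊤ : ℕ∞) W {(0 : Euc d)}ᶜ)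
    (hpos : ∀ y : Euc d, y ≠ 0 → 0 < W y)
    (hL : ∀ y : Euc d, y ≠ 0 → cylL α n W y = -(W y ^ (p - 1)))
    {x : Euc d} (hx : x ≠ 0) :
    pressure n W x * cylL α n (pressure n W) x
      = n / 2 * cylGradSq α (pressure n W) x + (n - 1) ^ 2 * (2 / (n - 2)) := by
  have hn2 : 0 < n - 2 := by linarith
  have hw := hpos x hx
  set m : ℝ := 2 / (n - 2) with hm
  have hm0 : 0 < m := by positivity
  have hp1 : p - 1 = 2 * m + 1 := by
    rw [hp, hm]
    field_simp
    ring
  have hnm : n / 2 * m = m + 1 := by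
    rw [hm]
    field_simp
    ring
  have hf : ∀ y : Euc d, y ≠ 0 → HasDerivAt (fun s : ℝ => (n - 1) * s ^ (-m))
      ((fun s : ℝ => (n - 1) * (-m * s ^ (-m - 1))) (W y)) (W y) := fun y hy =>
    (Real.hasDerivAt_rpow_const (Or.inl (hpos y hy).ne')).const_mul (n - 1)
  have hf₁ : ∀ y : Euc d, y ≠ 0 → HasDerivAt (fun s : ℝ => (n - 1) * (-m * s ^ (-m - 1)))
      ((fun s : ℝ => (n - 1) * (-m * ((-m - 1) * s ^ (-m - 1 - 1)))) (W y)) (W y) := fun y hy =>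
    ((Real.hasDerivAt_rpow_const (Or.inl (hpos y hy).ne')).const_mul (-m)).const_mul (n - 1)
  have e : pressure n W = fun y => (fun s : ℝ => (n - 1) * s ^ (-m)) (W y) := rfl
  have hc := cylL_comp (f₁ := fun s : ℝ => (n - 1) * (-m * s ^ (-m - 1)))
    (f₂ := fun s : ℝ => (n - 1) * (-m * ((-m - 1) * s ^ (-m - 1 - 1)))) α n hWs hf hf₁ hx
  have hg : cylGradSq α (pressure n W) x
      = ((n - 1) * (-m * W x ^ (-m - 1))) ^ 2 * cylGradSq α W x := by
    have hfd : ∀ v, fderiv ℝ (pressure n W) x v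
        = ((n - 1) * (-m * W x ^ (-m - 1))) * fderiv ℝ W x v := by
      intro v
      have h := ((hf x hx).comp_hasFDerivAt x (differentiableAt_of hWs hx).hasFDerivAt).fderiv
      have e' : pressure n W = (fun s : ℝ => (n - 1) * s ^ (-m)) ∘ W := rfl
      rw [e', h]
      rfl
    have hone : ∀ ψ : Euc d → ℝ, cylInnerD α (pressure n W) ψ x
        = ((n - 1) * (-m * W x ^ (-m - 1))) * cylInnerD α W ψ x := by
      intro ψ
      rw [cylInnerD_eq _ _ _ hx, cylInnerD_eq _ _ _ hx, hfd]
    rw [cylGradSq_eq, hone, cylInnerD_comm, hone, cylGradSq_eq]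
    ring
  rw [hg, e, hc, hL x hx, hp1]
  have r1 : W x ^ (2 * m + 1) = (W x ^ m) ^ 2 * W x := by
    rw [Real.rpow_add_one hw.ne', ← Real.rpow_natCast, ← Real.rpow_mul hw.le]
    congr 2
    push_cast
    ring
  have r2 : W x ^ (-m) = (W x ^ m)⁻¹ := Real.rpow_neg hw.le m
  have hwm := Real.rpow_pos_of_pos hw m
  simp only [Real.rpow_sub_one hw.ne', r1, r2]
  generalize W x ^ m = ω at *
  have : cylGradSq α W x * (n / 2 * m) = cylGradSq α W x * (m + 1) := by rw [hnm]
  clear_value m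
  field_simp
  linear_combination (-2 * (n - 1) ^ 2) * this

end PressureIdentity

/-- **Lemma (divergence identity).** If `u` is a positive solution and `𝐩` the pressure
function, then `𝐩^{1-n} 𝐤[𝐩] = D_i(½ 𝐩^{1-n} D_i|D𝐩|² − (1/n) 𝐩^{1-n} (𝓛𝐩) D_i𝐩)`
on `(0,∞) × S^{d-1}`. -/
theorem pressure_divergence_identity (d : ℕ) (a b : ℝ) (u W : Euc d → ℝ)
    (hadm : Admissible d a b)
    (hupos : ∀ x : Euc d, 0 < u x)
    (husol : IsCKNSolution d a b (pCKN d a b) u)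
    (hW : IsCylinderRep (alphaCKN d a b) u W) :
    ∀ x : Euc d, x ≠ 0 →
      pressure (nCKN d a b) W x ^ (1 - nCKN d a b) *
          bochK (alphaCKN d a b) (nCKN d a b) (pressure (nCKN d a b) W) x =
        cylDivFD (alphaCKN d a b) (nCKN d a b)
            (fun y => (1 / 2) * pressure (nCKN d a b) W y ^ (1 - nCKN d a b))
            (cylGradSq (alphaCKN d a b) (pressure (nCKN d a b) W)) x -
          cylDivFD (alphaCKN d a b) (nCKN d a b)
            (fun y => (1 / nCKN d a b) * pressure (nCKN d a b) W y ^ (1 - nCKN d a b) *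
              cylL (alphaCKN d a b) (nCKN d a b) (pressure (nCKN d a b) W) y)
            (pressure (nCKN d a b) W) x := by
  open PressureIdentity in
  obtain ⟨hcase, hac⟩ := hadm
  have hac' : 0 < acrit d - a := by linarith
  have hd2 : (2 : ℝ) ≤ d := by
    rcases hcase with ⟨h, -, -⟩ | ⟨h, -, -⟩
    · exact_mod_cast (by omega : 2 ≤ d)
    · exact_mod_cast h.ge
  have hb1 : b ≤ a + 1 := by rcases hcase with h | h <;> exact h.2.2
  rcases hb1.eq_or_lt with hb | hb
  · -- At the endpoint `1 + a - b = 0`, hence `α = 0`, and no solution exists.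
    exfalso
    have hα : alphaCKN d a b = 0 := by
      unfold alphaCKN
      rw [show 1 + a - b = 0 by linarith]
      simp
    rw [hα] at hW
    refine no_homogeneous_solution a (-(b * pCKN d a b)) (pCKN d a b - 1)
      (by exact_mod_cast (by linarith : (0 : ℝ) < d)) husol.1 hupos (fun x hx => ?_) husol.2
    have hx' : 0 < ‖x‖ := norm_pos_iff.2 hx
    have hx1 : ‖x‖⁻¹ • x ≠ 0 := smul_ne_zero (inv_ne_zero hx'.ne') hx
    have hn1 : ‖‖x‖⁻¹ • x‖ = 1 := by
      rw [norm_smul]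
      simp [hx'.ne']
    rw [hW.2 x hx, hW.2 _ hx1, hn1]
    simp [Real.rpow_neg_one]
  · have hk : 0 < 1 + a - b := by linarith
    have hdb : 0 < (d : ℝ) - 2 + 2 * (b - a) := by
      rcases hcase with ⟨h, h', -⟩ | ⟨h, h', -⟩
      · have : (3 : ℝ) ≤ d := by exact_mod_cast h
        linarith
      · linarith
    have hden : 0 < acrit d - a + b := by
      unfold acrit
      linarith
    have hα : 0 < alphaCKN d a b := div_pos (mul_pos hk hac') hden
    have hn2 : nCKN d a b - 2 = ((d : ℝ) - 2 + 2 * (b - a)) / (1 + a - b) := by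
      unfold nCKN
      field_simp
      ring
    have hn : 2 < nCKN d a b := by
      have := div_pos hdb hk
      linarith
    have hp : pCKN d a b = 2 * nCKN d a b / (nCKN d a b - 2) := by
      rw [hn2]
      unfold pCKN nCKN
      field_simp
    have hden2 : acrit d - a + b = ((d : ℝ) - 2 + 2 * (b - a)) / 2 := by
      unfold acrit
      ring
    have h1 : alphaCKN d a b * (nCKN d a b - 2) = (d : ℝ) - 2 - 2 * a := by
      rw [hn2]
      unfold alphaCKN
      rw [hden2]
      unfold acrit
      field_simp
    have h2 : 2 + 2 * a - b * pCKN d a b = 2 * alphaCKN d a b := by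
      unfold alphaCKN pCKN
      rw [hden2]
      unfold acrit
      field_simp
      ring
    have hWpos : ∀ y : Euc d, y ≠ 0 → 0 < W y := by
      intro y hy
      obtain ⟨x, hx, rfl⟩ := exists_stretch_eq hα.ne' hy
      have := hupos x
      rwa [hW.2 x hx] at this
    have hL : ∀ y : Euc d, y ≠ 0 →
        cylL (alphaCKN d a b) (nCKN d a b) W y = -(W y ^ (pCKN d a b - 1)) :=
      fun y hy => cylL_eq_of_solution hα.ne' h1 h2 husol hW hy
    have hqs : ContDiffOn ℝ (⊤ : ℕ∞) (pressure (nCKN d a b) W) {(0 : Euc d)}ᶜ :=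
      contDiffOn_const.mul (hW.1.rpow_const_of_ne fun y hy => (hWpos y hy).ne')
    intro x hx
    exact divergence_identity_of_eq _ _ _ (by linarith) hqs
      (fun y hy => mul_pos (by linarith) (Real.rpow_pos_of_pos (hWpos y hy) _))
      (fun y hy => pressure_equation _ hn hp hW.1 hWpos hL hy) hx
end
end

section
/- Assume n > d ≥ 2, α ≤ √((d-1)/(n-1)), and let 𝐩 ∈ C³((0,∞) × S^{d-1}) be positive. Then for every positive η = η(r) ∈ C_c^∞(0,∞) and every s ≥ 0, ∫_{(0,∞)×S^{d-1}} 𝐩^{1-n} 𝐤[𝐩] η^s dμ ≥ 0. -/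
/-!
Functions on the cylinder are functions on `ℝ^d \ {0}`. The Euler field `r ∂_r` (`TD`) commutes with
the rotation fields `x_i ∂_j - x_j ∂_i` (`RD`), and the angular operators are built from the latter:
`Gam f g = ∇_θ f · ∇_θ g` and `LS f = Δ_θ f`, the Casimir operator. This avoids charts on the sphere.

With `T = r ∂_r`, expanding the Bochner quantity and completing a square gives (`bochK_eq`)

  `r⁴ 𝐤[f] = (n-1)/n (α² (T² f - 2 T f) - Δ_θ f/(n-1))² + 2 α² |∇_θ (T f - f)|²`
  `        + (½ Δ_θ |∇_θ f|² - ∇_θ f · ∇_θ Δ_θ f - (Δ_θ f)²/(n-1) - (n-2) α² |∇_θ f|²)`.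

Only the last bracket may be negative, and by `α² ≤ (d-1)/(n-1)` it suffices to show, with
`N = n - 1 > d - 1`, that on each sphere (`sphere_ineq`)

  `∫ f^{-N} (½ Δ_θ |∇_θ f|² - ∇_θ f · ∇_θ Δ_θ f - (Δ_θ f)²/N - (N-1)(d-1)/N |∇_θ f|²) ≥ 0`.

* For `d ≥ 3`, the trace-free part of `∇²_θ f - τ ∇_θ f ⊗ ∇_θ f` has nonnegative squared norm, and
  the Ricci curvature of the sphere supplies the zeroth order gain (`pointwise_sphere`). Taking
  `τ = θ / f` and adding suitable multiples of two integration-by-parts identities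
  (`identity_one`, `identity_two`), the integrand becomes a sum of nonnegative terms
  (`sphere_ineq_three`).
* For `d = 2` there is no trace-free part; instead Wirtinger's inequality is applied to
  `f^{-N/2} ∂_θ f` on circles (`sphere_ineq_two`).

Spherical integrals are replaced by integrals against finite rotation-invariant measures carried by
annuli (`RadMeas`): all integrands are continuous there, and the only facts needed are that the
rotation fields are divergence free (`RadMeas.integral_RD`) and that averaging over orbits preserves
integrals (`RadMeas.integral_orbit`). The factor `η(r)^s r^{n-d} r^{-4}` is the density of such a
measure. Annuli exhaust `ℝ^d \ {0}`, so nonnegativity passes to the whole cylinder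
(`integral_nonneg_of_annulus`).
-/

open Real MeasureTheory Metric
open scoped RealInnerProductSpace

noncomputable section

/-! ### Linear vector fields on the punctured space -/

/-- Derivative of `f` along the linear vector field `x ↦ A x`. The Euler field `r ∂_r` is the case
`A = id`, the rotation fields `x_i ∂_j - x_j ∂_i` are the cases `A = rotGen (i, j)`. -/
def LD {d : ℕ} (A : Euc d →L[ℝ] Euc d) (f : Euc d → ℝ) (x : Euc d) : ℝ := fderiv ℝ f x (A x)

/-- `f` is of class `C^k` on the punctured space `ℝ^d \ {0}`. -/
def Sm {d : ℕ} (k : ℕ) (f : Euc d → ℝ) : Prop := ContDiffOn ℝ k f {(0 : Euc d)}ᶜ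

/-- Generator `x ↦ x_i e_j - x_j e_i` of the rotations in the plane `(i, j)`. -/
def rotGen {d : ℕ} (a : Fin d × Fin d) : Euc d →L[ℝ] Euc d :=
  (EuclideanSpace.proj a.1 : Euc d →L[ℝ] ℝ).smulRight (EuclideanSpace.single a.2 1)
    - (EuclideanSpace.proj a.2 : Euc d →L[ℝ] ℝ).smulRight (EuclideanSpace.single a.1 1)

/-- The Euler field `r ∂_r`. -/
def TD {d : ℕ} (f : Euc d → ℝ) : Euc d → ℝ := LD (ContinuousLinearMap.id ℝ (Euc d)) f

/-- The angular derivative `x_i ∂_j - x_j ∂_i`, for `a = (i, j)`. -/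
def RD {d : ℕ} (a : Fin d × Fin d) (f : Euc d → ℝ) : Euc d → ℝ := LD (rotGen a) f

section calculus
variable {d : ℕ} {k : ℕ} {f g : Euc d → ℝ} {A B : Euc d →L[ℝ] Euc d} {x : Euc d}

lemma isOpen_punct : IsOpen ({(0 : Euc d)}ᶜ) := isOpen_compl_singleton

lemma Sm.of_le {l : ℕ} (hf : Sm k f) (h : l ≤ k) : Sm l f :=
  ContDiffOn.of_le hf (by exact_mod_cast h)

lemma Sm.contDiffAt (hf : Sm k f) (hx : x ≠ 0) : ContDiffAt ℝ k f x :=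
  ContDiffOn.contDiffAt hf (isOpen_punct.mem_nhds hx)

lemma Sm.diff (hf : Sm k f) (hk : 1 ≤ k) (hx : x ≠ 0) : DifferentiableAt ℝ f x :=
  (hf.contDiffAt hx).differentiableAt (by
    have : k ≠ 0 := by omega
    exact_mod_cast this)

lemma Sm.congr (hf : Sm k f) (h : ∀ x, x ≠ 0 → g x = f x) : Sm k g :=
  ContDiffOn.congr hf h

lemma Sm.LD (hf : Sm (k + 1) f) (A : Euc d →L[ℝ] Euc d) : Sm k (LD A f) :=
  (ContDiffOn.fderiv_of_isOpen hf isOpen_punct (by simp)).clm_apply A.contDiff.contDiffOn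

lemma Sm.TD (hf : Sm (k + 1) f) : Sm k (TD f) := hf.LD _

lemma Sm.RD (hf : Sm (k + 1) f) (a : Fin d × Fin d) : Sm k (RD a f) := hf.LD _

lemma Sm.mul (hf : Sm k f) (hg : Sm k g) : Sm k (fun x => f x * g x) := ContDiffOn.mul hf hg

lemma Sm.add (hf : Sm k f) (hg : Sm k g) : Sm k (fun x => f x + g x) := ContDiffOn.add hf hg

lemma Sm.const_mul (hf : Sm k f) (c : ℝ) : Sm k (fun x => c * f x) :=
  (contDiffOn_const).mul hf

lemma Sm.pow (hf : Sm k f) (m : ℕ) : Sm k (fun x => f x ^ m) := ContDiffOn.pow hf m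

lemma Sm.sum {ι : Type*} [Fintype ι] {F : ι → Euc d → ℝ} (hF : ∀ i, Sm k (F i)) :
    Sm k (fun x => ∑ i, F i x) := ContDiffOn.sum fun i _ => hF i

lemma Sm.rpow (hf : Sm k f) (hpos : ∀ x, x ≠ 0 → 0 < f x) (c : ℝ) :
    Sm k (fun x => f x ^ c) := ContDiffOn.rpow_const_of_ne hf fun x hx => (hpos x hx).ne'

lemma Sm.continuousOn (hf : Sm k f) : ContinuousOn f {(0 : Euc d)}ᶜ := ContDiffOn.continuousOn hf

lemma LD_congr (h : ∀ x, x ≠ 0 → f x = g x) (hx : x ≠ 0) : LD A f x = LD A g x := by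
  have : f =ᶠ[nhds x] g := by
    filter_upwards [isOpen_punct.mem_nhds hx] with y hy using h y hy
  simp only [LD, this.fderiv_eq]

lemma LD_mul (hf : Sm k f) (hg : Sm k g) (hk : 1 ≤ k) (hx : x ≠ 0) :
    LD A (fun x => f x * g x) x = LD A f x * g x + f x * LD A g x := by
  simp only [LD, fderiv_fun_mul (hf.diff hk hx) (hg.diff hk hx)]
  simp; ring

lemma LD_add (hf : Sm k f) (hg : Sm k g) (hk : 1 ≤ k) (hx : x ≠ 0) :
    LD A (fun x => f x + g x) x = LD A f x + LD A g x := by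
  simp only [LD, fderiv_fun_add (hf.diff hk hx) (hg.diff hk hx)]
  simp

lemma LD_const_mul (hf : Sm k f) (hk : 1 ≤ k) (c : ℝ) (hx : x ≠ 0) :
    LD A (fun x => c * f x) x = c * LD A f x := by
  simp only [LD, fderiv_const_mul (hf.diff hk hx)]
  simp

lemma LD_sum {ι : Type*} [Fintype ι] {F : ι → Euc d → ℝ} (hF : ∀ i, Sm k (F i)) (hk : 1 ≤ k)
    (hx : x ≠ 0) : LD A (fun x => ∑ i, F i x) x = ∑ i, LD A (F i) x := by
  simp only [LD]
  rw [fderiv_fun_sum fun i _ => (hF i).diff hk hx]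
  simp

lemma LD_rpow (hf : Sm k f) (hk : 1 ≤ k) (hpos : ∀ x, x ≠ 0 → 0 < f x) (c : ℝ) (hx : x ≠ 0) :
    LD A (fun x => f x ^ c) x = c * f x ^ (c - 1) * LD A f x := by
  have := ((hf.diff hk hx).hasFDerivAt.rpow_const (p := c) (Or.inl (hpos x hx).ne')).fderiv
  simp only [LD, this]
  simp

/-- Iterated derivatives along linear fields: the Hessian of `f` plus a first-order term. -/
lemma LD_LD (hf : Sm 2 f) (hx : x ≠ 0) :
    LD A (LD B f) x = fderiv ℝ (fderiv ℝ f) x (A x) (B x) + fderiv ℝ f x (B (A x)) := by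
  have h1 : DifferentiableAt ℝ (fderiv ℝ f) x :=
    ((hf.contDiffAt hx).fderiv_right (m := 1) (by norm_num)).differentiableAt (by norm_num)
  have h2 := (h1.hasFDerivAt.clm_apply (B.hasFDerivAt (x := x))).fderiv
  change fderiv ℝ (fun y => fderiv ℝ f y (B y)) x (A x) = _
  rw [h2]
  simp [add_comm]

lemma snd_symm (hf : Sm 2 f) (hx : x ≠ 0) (v w : Euc d) :
    fderiv ℝ (fderiv ℝ f) x v w = fderiv ℝ (fderiv ℝ f) x w v :=
  ((hf.contDiffAt hx).isSymmSndFDerivAt (by simp)) v w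

lemma TD_LD_comm (hf : Sm 2 f) (hx : x ≠ 0) : TD (LD A f) x = LD A (TD f) x := by
  rw [TD, TD, LD_LD hf hx, LD_LD hf hx, snd_symm hf hx]; simp

lemma TD_RD_comm (hf : Sm 2 f) (a : Fin d × Fin d) (hx : x ≠ 0) :
    TD (RD a f) x = RD a (TD f) x := TD_LD_comm hf hx

end calculus

/-! ### Polar decomposition of the cylinder operators -/

/-- Spherical carré du champ `∇_θ f · ∇_θ g`, through the rotation fields. The sum runs over
ordered pairs, which is why it is halved. -/
def Gam {d : ℕ} (f g : Euc d → ℝ) (x : Euc d) : ℝ := 1 / 2 * ∑ a, RD a f x * RD a g x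

/-- Spherical Laplacian `Δ_θ f`, i.e. the Casimir operator of the rotation fields. -/
def LS {d : ℕ} (f : Euc d → ℝ) (x : Euc d) : ℝ := 1 / 2 * ∑ a, RD a (RD a f) x

/-- Gradient of `f` at `x` in coordinates. -/
def gv {d : ℕ} (f : Euc d → ℝ) (x : Euc d) (i : Fin d) : ℝ :=
  fderiv ℝ f x (EuclideanSpace.single i 1)

/-- Hessian of `f` at `x` in coordinates. -/
def hm {d : ℕ} (f : Euc d → ℝ) (x : Euc d) (i j : Fin d) : ℝ :=
  fderiv ℝ (fderiv ℝ f) x (EuclideanSpace.single i 1) (EuclideanSpace.single j 1)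

section coords
variable {d : ℕ} {k : ℕ} {f g : Euc d → ℝ} {x : Euc d}

lemma hm_symm (hf : Sm 2 f) (hx : x ≠ 0) (i j : Fin d) : hm f x i j = hm f x j i :=
  snd_symm hf hx _ _

lemma euc_sum (x : Euc d) : x = ∑ i, x i • (EuclideanSpace.single i (1 : ℝ) : Euc d) := by
  have := (EuclideanSpace.basisFun (Fin d) ℝ).sum_repr x
  simpa using this.symm

lemma rotGen_apply (i j : Fin d) (x : Euc d) :
    rotGen (i, j) x = x i • EuclideanSpace.single j (1 : ℝ) - x j • EuclideanSpace.single i 1 := by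
  simp [rotGen]

lemma RD_apply (i j : Fin d) : RD (i, j) f x = x i * gv f x j - x j * gv f x i := by
  simp only [RD, LD, rotGen_apply, map_sub, map_smul, gv, smul_eq_mul]

lemma clm_coord (D : Euc d →L[ℝ] ℝ) (v : Euc d) :
    D v = ∑ i, v i * D (EuclideanSpace.single i 1) := by
  conv_lhs => rw [euc_sum v]
  simp only [map_sum, map_smul, smul_eq_mul]

lemma TD_apply : TD f x = ∑ i, x i * gv f x i := by
  simp only [TD, LD, ContinuousLinearMap.id_apply, gv]
  exact clm_coord _ _

lemma TD_TD_apply (hf : Sm 2 f) (hx : x ≠ 0) :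
    TD (TD f) x = ∑ i, ∑ j, x i * x j * hm f x i j + TD f x := by
  rw [TD, TD, LD_LD hf hx]
  simp only [ContinuousLinearMap.id_apply, add_left_inj, LD, hm]
  rw [clm_coord]
  simp only [fun i => snd_symm hf hx x (EuclideanSpace.single i 1)]
  refine Finset.sum_congr rfl fun i _ => ?_
  rw [clm_coord, Finset.mul_sum]
  exact Finset.sum_congr rfl fun j _ => by ring

lemma RD_RD_apply (hf : Sm 2 f) (hx : x ≠ 0) (k l i j : Fin d) :
    RD (k, l) (RD (i, j) f) x =
      x k * (x i * hm f x l j - x j * hm f x l i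
        + ((if i = l then 1 else 0) * gv f x j - (if j = l then 1 else 0) * gv f x i))
      - x l * (x i * hm f x k j - x j * hm f x k i
        + ((if i = k then 1 else 0) * gv f x j - (if j = k then 1 else 0) * gv f x i)) := by
  rw [RD, RD, LD_LD hf hx]
  simp only [rotGen_apply, map_sub, map_smul, _root_.sub_apply, gv, hm,
    _root_.smul_apply, smul_eq_mul, PiLp.single_apply]
  ring

/-- Lagrange's identity. -/
lemma lagrange (p q c e : Fin d → ℝ) :
    1 / 2 * ∑ a : Fin d × Fin d, (p a.1 * q a.2 - p a.2 * q a.1) * (c a.1 * e a.2 - c a.2 * e a.1)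
      = (∑ i, p i * c i) * (∑ i, q i * e i) - (∑ i, p i * e i) * (∑ i, q i * c i) := by
  rw [Fintype.sum_prod_type, Finset.sum_mul_sum, Finset.sum_mul_sum]
  have h : ∀ i j, (p i * q j - p j * q i) * (c i * e j - c j * e i)
      = p i * c i * (q j * e j) - p i * e i * (q j * c j) + (q i * e i * (p j * c j)
        - q i * c i * (p j * e j)) := by intros; ring
  simp only [h, Finset.sum_add_distrib, Finset.sum_sub_distrib]
  have h2 : ∀ u v : Fin d → ℝ, ∑ i, ∑ j, u i * v j = ∑ i, ∑ j, v i * u j := by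
    intro u v; rw [Finset.sum_comm]; simp only [mul_comm]
  rw [h2 (fun i => q i * e i), h2 (fun i => q i * c i)]
  ring

lemma norm_sq_coord (x : Euc d) : ‖x‖ ^ 2 = ∑ i, x i * x i := by
  rw [EuclideanSpace.real_norm_sq_eq]; simp [sq]

lemma Gam_apply : Gam f g x = ‖x‖ ^ 2 * (∑ i, gv f x i * gv g x i) - TD f x * TD g x := by
  have := lagrange (fun i => x i) (gv f x) (fun i => x i) (gv g x)
  simp only [Gam, TD_apply, norm_sq_coord]
  rw [show ∑ a, RD a f x * RD a g x = ∑ a : Fin d × Fin d, (x a.1 * gv f x a.2 - x a.2 * gv f x a.1)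
    * (x a.1 * gv g x a.2 - x a.2 * gv g x a.1) from
    Finset.sum_congr rfl fun a _ => by rw [← RD_apply, ← RD_apply], this]
  simp only [mul_comm]

lemma LS_apply (hf : Sm 2 f) (hx : x ≠ 0) :
    LS f x = ‖x‖ ^ 2 * (∑ i, hm f x i i) - TD (TD f) x - ((d : ℝ) - 2) * TD f x := by
  rw [TD_TD_apply hf hx, LS, Fintype.sum_prod_type, norm_sq_coord, Finset.sum_mul_sum, TD_apply]
  have h : ∀ i j, RD (i, j) (RD (i, j) f) x = x i * x i * hm f x j j + x j * x j * hm f x i i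
      - x i * x j * hm f x i j - x j * x i * hm f x j i
      + 2 * ((if i = j then 1 else 0) * (x i * gv f x i)) - x i * gv f x i - x j * gv f x j := by
    intro i j
    rw [RD_RD_apply hf hx]
    by_cases hij : i = j
    · subst hij; simp; ring
    · simp [hij, Ne.symm hij]; ring
  simp only [h, Finset.sum_add_distrib, Finset.sum_sub_distrib]
  rw [Finset.sum_comm (f := fun i j => x j * x j * hm f x i i),
    Finset.sum_comm (f := fun i j => x j * x i * hm f x j i)]
  simp only [← Finset.mul_sum, Finset.sum_const, Finset.card_univ, Fintype.card_fin, nsmul_eq_mul,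
    ite_mul, one_mul, zero_mul, Finset.sum_ite_eq, Finset.mem_univ, if_true]
  have h3 : ∑ i, x i * ((d : ℝ) * gv f x i) = d * ∑ i, x i * gv f x i := by
    rw [Finset.mul_sum]; exact Finset.sum_congr rfl fun i _ => by ring
  rw [h3, ← Finset.sum_mul]
  ring

lemma eLap_eq (hf : Sm 2 f) (hx : x ≠ 0) : eLap f x = ∑ i, hm f x i i := by
  unfold eLap
  refine Finset.sum_congr rfl fun i _ => ?_
  have h1 : DifferentiableAt ℝ (fderiv ℝ f) x :=
    ((hf.contDiffAt hx).fderiv_right (m := 1) (by norm_num)).differentiableAt (by norm_num)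
  have h2 := (h1.hasFDerivAt.clm_apply
    (hasFDerivAt_const (EuclideanSpace.single i (1 : ℝ) : Euc d) x)).fderiv
  rw [h2]
  simp [hm]

lemma rD_eq (V : Euc d → ℝ) (x : Euc d) : rD V x = ‖x‖⁻¹ * TD V x := by
  simp [rD, TD, LD]

lemma inner_tGrad (V Q : Euc d → ℝ) (hx : x ≠ 0) :
    ⟪tGrad V x, tGrad Q x⟫ = Gam V Q x / ‖x‖ ^ 2 := by
  have hn : ‖x‖ ≠ 0 := norm_ne_zero_iff.2 hx
  have h0 : ⟪gradient V x, gradient Q x⟫ = ∑ i, gv V x i * gv Q x i := by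
    rw [inner_gradient_left, clm_coord]
    refine Finset.sum_congr rfl fun i _ => ?_
    have h1 : ⟪gradient Q x, EuclideanSpace.single i (1 : ℝ)⟫ = gv Q x i := inner_gradient_left
    have h2 : (gradient Q x) i = gv Q x i := by
      rw [← h1, EuclideanSpace.inner_single_right]; simp
    rw [h2, mul_comm]; rfl
  have hV : ⟪gradient V x, x⟫ = TD V x := by rw [inner_gradient_left]; rfl
  have hQ : ⟪x, gradient Q x⟫ = TD Q x := by rw [inner_gradient_right]; rfl
  simp only [tGrad, inner_sub_left, inner_sub_right, inner_smul_left, inner_smul_right, h0, hV, hQ,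
    rD_eq, Gam_apply, real_inner_self_eq_norm_sq]
  simp
  field_simp
  ring

end coords

section polar
variable {d : ℕ} {k : ℕ} {f g : Euc d → ℝ} {x : Euc d}

lemma norm_sq_pos (x : Euc d) (hx : x ≠ 0) : 0 < ‖x‖ ^ 2 := by
  have := norm_pos_iff.2 hx; positivity

lemma Sm_norm_sq : Sm k (fun x : Euc d => ‖x‖ ^ 2) := (contDiff_norm_sq ℝ).contDiffOn

lemma Sm_radial (c : ℝ) : Sm k (fun x : Euc d => (‖x‖ ^ 2) ^ c) :=
  Sm_norm_sq.rpow norm_sq_pos c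

lemma LD_norm_sq (A : Euc d →L[ℝ] Euc d) : LD A (fun x => ‖x‖ ^ 2) x = 2 * ⟪x, A x⟫ := by
  have := (hasStrictFDerivAt_norm_sq x).hasFDerivAt.fderiv
  simp only [LD, this]
  simp [two_smul, two_mul]

lemma inner_rotGen (a : Fin d × Fin d) (x : Euc d) : ⟪x, rotGen a x⟫ = 0 := by
  obtain ⟨i, j⟩ := a
  rw [rotGen_apply, inner_sub_right, inner_smul_right, inner_smul_right,
    EuclideanSpace.inner_single_right, EuclideanSpace.inner_single_right]
  simp [mul_comm]

lemma TD_radial (c : ℝ) (hx : x ≠ 0) :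
    TD (fun x : Euc d => (‖x‖ ^ 2) ^ c) x = 2 * c * (‖x‖ ^ 2) ^ c := by
  rw [TD, LD_rpow (k := 1) Sm_norm_sq le_rfl norm_sq_pos c hx, LD_norm_sq,
    Real.rpow_sub_one (norm_sq_pos x hx).ne']
  have := (norm_sq_pos x hx).ne'
  simp
  field_simp

lemma RD_radial (c : ℝ) (a : Fin d × Fin d) (hx : x ≠ 0) :
    RD a (fun x : Euc d => (‖x‖ ^ 2) ^ c) x = 0 := by
  rw [RD, LD_rpow (k := 1) Sm_norm_sq le_rfl norm_sq_pos c hx, LD_norm_sq, inner_rotGen]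
  simp

/-- Radial factors are shifted by their degree of homogeneity under the Euler field. -/
lemma TD_radial_mul (hf : Sm 1 f) (c : ℝ) (hx : x ≠ 0) :
    TD (fun x => (‖x‖ ^ 2) ^ c * f x) x = (‖x‖ ^ 2) ^ c * (TD f x + 2 * c * f x) := by
  rw [TD, LD_mul (k := 1) (Sm_radial c) hf le_rfl hx, ← TD, TD_radial c hx, ← TD]
  ring

lemma RD_radial_mul (hf : Sm 1 f) (c : ℝ) (a : Fin d × Fin d) (hx : x ≠ 0) :
    RD a (fun x => (‖x‖ ^ 2) ^ c * f x) x = (‖x‖ ^ 2) ^ c * RD a f x := by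
  rw [RD, LD_mul (k := 1) (Sm_radial c) hf le_rfl hx, ← RD, RD_radial c a hx, ← RD]
  ring

lemma TD_TD_radial_mul (hf : Sm 2 f) (c : ℝ) (hx : x ≠ 0) :
    TD (TD (fun x => (‖x‖ ^ 2) ^ c * f x)) x
      = (‖x‖ ^ 2) ^ c * (TD (TD f) x + 4 * c * TD f x + 4 * c ^ 2 * f x) := by
  have h1 : TD (TD (fun x => (‖x‖ ^ 2) ^ c * f x)) x
      = TD (fun x => (‖x‖ ^ 2) ^ c * (TD f x + 2 * c * f x)) x :=
    LD_congr (fun y hy => TD_radial_mul (hf.of_le (by norm_num)) c hy) hx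
  have hf1 : Sm 1 f := hf.of_le (by norm_num)
  have h2 : TD (fun x => TD f x + 2 * c * f x) x = TD (TD f) x + 2 * c * TD f x := by
    have e1 := LD_add (A := ContinuousLinearMap.id ℝ (Euc d)) (k := 1) (f := TD f)
      (g := fun x => 2 * c * f x) hf.TD (hf1.const_mul _) le_rfl hx
    have e2 := LD_const_mul (A := ContinuousLinearMap.id ℝ (Euc d)) hf1 le_rfl (2 * c) hx
    rw [e2] at e1
    exact e1
  rw [h1, TD_radial_mul (f := fun x => TD f x + 2 * c * f x)
    ((Sm.TD (k := 1) hf).add (hf1.const_mul _)) c hx, h2]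
  ring

lemma LS_radial_mul (hf : Sm 2 f) (c : ℝ) (hx : x ≠ 0) :
    LS (fun x => (‖x‖ ^ 2) ^ c * f x) x = (‖x‖ ^ 2) ^ c * LS f x := by
  have h (a : Fin d × Fin d) : RD a (RD a (fun x => (‖x‖ ^ 2) ^ c * f x)) x
      = (‖x‖ ^ 2) ^ c * RD a (RD a f) x := by
    have h1 : RD a (RD a (fun x => (‖x‖ ^ 2) ^ c * f x)) x
        = RD a (fun x => (‖x‖ ^ 2) ^ c * RD a f x) x :=
      LD_congr (fun y hy => RD_radial_mul (hf.of_le (by norm_num)) c a hy) hx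
    rw [h1, RD_radial_mul (hf.RD a) c a hx]
  simp only [LS, h, ← Finset.mul_sum]
  ring

lemma LS_congr (h : ∀ x, x ≠ 0 → f x = g x) (hx : x ≠ 0) : LS f x = LS g x := by
  unfold LS
  congr 1
  exact Finset.sum_congr rfl fun a _ => LD_congr (fun y hy => LD_congr h hy) hx

lemma TD_congr (h : ∀ x, x ≠ 0 → f x = g x) (hx : x ≠ 0) : TD f x = TD g x := LD_congr h hx

lemma TD_TD_congr (h : ∀ x, x ≠ 0 → f x = g x) (hx : x ≠ 0) : TD (TD f) x = TD (TD g) x :=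
  LD_congr (fun _ hy => LD_congr h hy) hx

lemma inv_norm_eq (x : Euc d) : ‖x‖⁻¹ = (‖x‖ ^ 2) ^ (-(1 / 2) : ℝ) := by
  rw [Real.rpow_neg (by positivity), ← Real.sqrt_eq_rpow, Real.sqrt_sq (norm_nonneg _)]

lemma inv_norm_sq_eq (x : Euc d) : (‖x‖ ^ 2)⁻¹ = (‖x‖ ^ 2) ^ (-1 : ℝ) := by
  rw [Real.rpow_neg_one]

lemma rD2_eq (hf : Sm 2 f) (hx : x ≠ 0) :
    rD2 f x = (‖x‖ ^ 2)⁻¹ * (TD (TD f) x - TD f x) := by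
  have h : TD (rD f) x = TD (fun x => (‖x‖ ^ 2) ^ (-(1 / 2) : ℝ) * TD f x) x :=
    TD_congr (fun y _ => by rw [rD_eq, inv_norm_eq]) hx
  rw [rD2, rD_eq, h, TD_radial_mul hf.TD _ hx, ← inv_norm_eq]
  field_simp
  ring

/-- In terms of the Euler and rotation fields,
`r² 𝓛 = α² ((r∂_r)² + (n-2) r∂_r) + Δ_θ`. -/
lemma cylL_eq (α n : ℝ) (hf : Sm 2 f) (hx : x ≠ 0) :
    cylL α n f x = (‖x‖ ^ 2)⁻¹ * (α ^ 2 * (TD (TD f) x + (n - 2) * TD f x) + LS f x) := by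
  have hn : ‖x‖ ≠ 0 := norm_ne_zero_iff.2 hx
  rw [cylL, sphLapR2, LS_apply hf hx, eLap_eq hf hx, rD2_eq hf hx, rD_eq]
  field_simp
  ring

lemma cylInnerD_eq (α : ℝ) (V Q : Euc d → ℝ) (hx : x ≠ 0) :
    cylInnerD α V Q x = (‖x‖ ^ 2)⁻¹ * (α ^ 2 * TD V x * TD Q x + Gam V Q x) := by
  have hn : ‖x‖ ≠ 0 := norm_ne_zero_iff.2 hx
  rw [cylInnerD, rD_eq, rD_eq, inner_tGrad _ _ hx]
  field_simp

lemma cylGradSq_eq (α : ℝ) (V : Euc d → ℝ) (hx : x ≠ 0) :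
    cylGradSq α V x = (‖x‖ ^ 2)⁻¹ * (α ^ 2 * TD V x * TD V x + Gam V V x) := by
  rw [← cylInnerD_eq α V V hx, cylGradSq, cylInnerD, real_inner_self_eq_norm_sq]
  ring

end polar

/-! ### The Bochner quantity in polar form -/

section bochner
variable {d : ℕ} {k : ℕ} {f g h : Euc d → ℝ} {x : Euc d}

lemma Gam_comm (f g : Euc d → ℝ) (x : Euc d) : Gam f g x = Gam g f x := by
  simp only [Gam, mul_comm]

lemma Sm.Gam (hf : Sm (k + 1) f) (hg : Sm (k + 1) g) : Sm k (Gam f g) :=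
  (Sm.sum fun a => (hf.RD a).mul (hg.RD a)).const_mul _

lemma Sm.LS (hf : Sm (k + 2) f) : Sm k (LS f) :=
  (Sm.sum fun a => ((Sm.RD (k := k + 1) hf a).RD a)).const_mul _

lemma RD_mul (hf : Sm 1 f) (hg : Sm 1 g) (a : Fin d × Fin d) (hx : x ≠ 0) :
    RD a (fun x => f x * g x) x = RD a f x * g x + f x * RD a g x := LD_mul hf hg le_rfl hx

lemma TD_mul (hf : Sm 1 f) (hg : Sm 1 g) (hx : x ≠ 0) :
    TD (fun x => f x * g x) x = TD f x * g x + f x * TD g x := LD_mul hf hg le_rfl hx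

lemma RD_add (hf : Sm 1 f) (hg : Sm 1 g) (a : Fin d × Fin d) (hx : x ≠ 0) :
    RD a (fun x => f x + g x) x = RD a f x + RD a g x := LD_add hf hg le_rfl hx

lemma TD_add (hf : Sm 1 f) (hg : Sm 1 g) (hx : x ≠ 0) :
    TD (fun x => f x + g x) x = TD f x + TD g x := LD_add hf hg le_rfl hx

lemma RD_const_mul (hf : Sm 1 f) (c : ℝ) (a : Fin d × Fin d) (hx : x ≠ 0) :
    RD a (fun x => c * f x) x = c * RD a f x := LD_const_mul hf le_rfl c hx

lemma TD_const_mul (hf : Sm 1 f) (c : ℝ) (hx : x ≠ 0) :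
    TD (fun x => c * f x) x = c * TD f x := LD_const_mul hf le_rfl c hx

lemma RD_congr (h : ∀ x, x ≠ 0 → f x = g x) (a : Fin d × Fin d) (hx : x ≠ 0) :
    RD a f x = RD a g x := LD_congr h hx

lemma Gam_congr_right (h : ∀ x, x ≠ 0 → g x = f x) (u : Euc d → ℝ) (hx : x ≠ 0) :
    Gam u g x = Gam u f x := by
  simp only [Gam, fun a => RD_congr h a hx]

lemma Gam_add_right (hf : Sm 1 f) (hg : Sm 1 g) (u : Euc d → ℝ) (hx : x ≠ 0) :
    Gam u (fun x => f x + g x) x = Gam u f x + Gam u g x := by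
  simp only [Gam, fun a => RD_add hf hg a hx, mul_add, Finset.sum_add_distrib]

lemma Gam_const_mul_right (hf : Sm 1 f) (c : ℝ) (u : Euc d → ℝ) (hx : x ≠ 0) :
    Gam u (fun x => c * f x) x = c * Gam u f x := by
  simp only [Gam, fun a => RD_const_mul hf c a hx, Finset.mul_sum]
  exact Finset.sum_congr rfl fun a _ => by ring

lemma Gam_radial_mul_right (hf : Sm 1 f) (c : ℝ) (u : Euc d → ℝ) (hx : x ≠ 0) :
    Gam u (fun x => (‖x‖ ^ 2) ^ c * f x) x = (‖x‖ ^ 2) ^ c * Gam u f x := by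
  simp only [Gam, fun a => RD_radial_mul hf c a hx, Finset.mul_sum]
  exact Finset.sum_congr rfl fun a _ => by ring

lemma LD_half_sum {ι : Type*} [Fintype ι] {F : ι → Euc d → ℝ} (hF : ∀ i, Sm 1 (F i))
    (A : Euc d →L[ℝ] Euc d) (hx : x ≠ 0) :
    LD A (fun x => 1 / 2 * ∑ i, F i x) x = 1 / 2 * ∑ i, LD A (F i) x := by
  rw [LD_const_mul (Sm.sum hF) le_rfl _ hx, LD_sum hF le_rfl hx]

lemma TD_Gam (hf : Sm 2 f) (hg : Sm 2 g) (hx : x ≠ 0) :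
    TD (Gam f g) x = Gam (TD f) g x + Gam f (TD g) x := by
  have h1 : TD (Gam f g) x = 1 / 2 * ∑ a, TD (fun y => RD a f y * RD a g y) x :=
    LD_half_sum (fun a => (hf.RD a).mul (hg.RD a)) _ hx
  rw [h1, Gam, Gam, ← mul_add, ← Finset.sum_add_distrib]
  congr 1
  refine Finset.sum_congr rfl fun a _ => ?_
  rw [TD_mul (hf.RD a) (hg.RD a) hx, TD_RD_comm hf a hx, TD_RD_comm hg a hx]

lemma RD_Gam_self (hf : Sm 2 f) (a : Fin d × Fin d) (hx : x ≠ 0) :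
    RD a (Gam f f) x = ∑ b, RD b f x * RD a (RD b f) x := by
  have h1 : RD a (Gam f f) x = 1 / 2 * ∑ b, RD a (fun y => RD b f y * RD b f y) x :=
    LD_half_sum (fun b => (hf.RD b).mul (hf.RD b)) _ hx
  rw [h1, Finset.mul_sum]
  refine Finset.sum_congr rfl fun b _ => ?_
  rw [RD_mul (hf.RD b) (hf.RD b) a hx]
  ring

lemma LS_add (hf : Sm 2 f) (hg : Sm 2 g) (hx : x ≠ 0) :
    LS (fun x => f x + g x) x = LS f x + LS g x := by
  have h (a : Fin d × Fin d) : RD a (RD a fun x => f x + g x) x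
      = RD a (RD a f) x + RD a (RD a g) x := by
    rw [RD_congr (fun y hy => RD_add (hf.of_le (by norm_num)) (hg.of_le (by norm_num)) a hy) a hx,
      RD_add (hf.RD a) (hg.RD a) a hx]
  simp only [LS, h, Finset.sum_add_distrib, mul_add]

lemma LS_const_mul (hf : Sm 2 f) (c : ℝ) (hx : x ≠ 0) :
    LS (fun x => c * f x) x = c * LS f x := by
  have h (a : Fin d × Fin d) : RD a (RD a fun x => c * f x) x = c * RD a (RD a f) x := by
    rw [RD_congr (fun y hy => RD_const_mul (hf.of_le (by norm_num)) c a hy) a hx,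
      RD_const_mul (hf.RD a) c a hx]
  simp only [LS, h, ← Finset.mul_sum]
  ring

lemma LS_mul (hf : Sm 2 f) (hg : Sm 2 g) (hx : x ≠ 0) :
    LS (fun x => f x * g x) x = LS f x * g x + f x * LS g x + 2 * Gam f g x := by
  have hf1 : Sm 1 f := hf.of_le (by norm_num)
  have hg1 : Sm 1 g := hg.of_le (by norm_num)
  have h (a : Fin d × Fin d) : RD a (RD a fun x => f x * g x) x
      = RD a (RD a f) x * g x + f x * RD a (RD a g) x + 2 * (RD a f x * RD a g x) := by
    rw [RD_congr (fun y hy => RD_mul hf1 hg1 a hy) a hx,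
      RD_add ((hf.RD a).mul hg1) (hf1.mul (hg.RD a)) a hx, RD_mul (hf.RD a) hg1 a hx,
      RD_mul hf1 (hg.RD a) a hx]
    ring
  simp only [LS, Gam, h, Finset.sum_add_distrib, ← Finset.mul_sum, ← Finset.sum_mul]
  ring

lemma TD_LS (hf : Sm 3 f) (hx : x ≠ 0) : TD (LS f) x = LS (TD f) x := by
  have hf2 : Sm 2 f := hf.of_le (by norm_num)
  have h1 : TD (LS f) x = 1 / 2 * ∑ a, TD (RD a (RD a f)) x :=
    LD_half_sum (fun a => (Sm.RD (k := 2) hf a).RD a) _ hx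
  rw [h1, LS]
  congr 1
  refine Finset.sum_congr rfl fun a _ => ?_
  rw [TD_RD_comm (Sm.RD (k := 2) hf a) a hx]
  exact RD_congr (fun y hy => TD_RD_comm hf2 a hy) a hx

lemma Gam_self_nonneg (f : Euc d → ℝ) (x : Euc d) : 0 ≤ Gam f f x := by
  have : 0 ≤ ∑ a, RD a f x * RD a f x := Finset.sum_nonneg fun a _ => mul_self_nonneg _
  rw [Gam]; positivity

lemma Gam_sub_nonneg (f g : Euc d → ℝ) (x : Euc d) :
    0 ≤ Gam f f x - 2 * Gam g f x + Gam g g x := by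
  have h : Gam f f x - 2 * Gam g f x + Gam g g x = 1 / 2 * ∑ a, (RD a f x - RD a g x) ^ 2 := by
    simp only [Gam, sub_sq, Finset.mul_sum,
      ← Finset.sum_sub_distrib, ← Finset.sum_add_distrib]
    exact Finset.sum_congr rfl fun a _ => by ring
  rw [h]
  have : 0 ≤ ∑ a, (RD a f x - RD a g x) ^ 2 := Finset.sum_nonneg fun a _ => sq_nonneg _
  positivity

/-- Polar form of `𝐤[f]`: completing the square in the radial second derivative and in the mixed
derivatives leaves only the spherical Bochner quantity. All third-order derivatives other than
those in `½ Δ_θ |∇_θ f|² - ∇_θ f · ∇_θ Δ_θ f` cancel. -/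
lemma bochK_eq (α n : ℝ) (hn0 : n ≠ 0) (hn1 : n ≠ 1) (hf : Sm 3 f) (hx : x ≠ 0) :
    bochK α n f x = ((‖x‖ ^ 2)⁻¹) ^ 2 *
      ((n - 1) / n * (α ^ 2 * (TD (TD f) x - 2 * TD f x) - LS f x / (n - 1)) ^ 2
        + 2 * α ^ 2 * (Gam (TD f) (TD f) x - 2 * Gam f (TD f) x + Gam f f x)
        + (1 / 2 * LS (Gam f f) x - Gam f (LS f) x - LS f x ^ 2 / (n - 1)
          - (n - 2) * α ^ 2 * Gam f f x)) := by
  have hf2 : Sm 2 f := hf.of_le (by norm_num)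
  have hf1 : Sm 1 f := hf.of_le (by norm_num)
  have hq : Sm 2 (TD f) := hf.TD
  have hq1 : Sm 1 (TD f) := hq.of_le (by norm_num)
  have hw : Sm 1 (TD (TD f)) := hq.TD
  have hG : Sm 2 (Gam f f) := hf.Gam hf
  have hY : Sm 1 (LS f) := hf.LS
  set W : Euc d → ℝ := fun y => α ^ 2 * (TD f y * TD f y) + Gam f f y with hWdef
  have hqq : Sm 2 (fun y => α ^ 2 * (TD f y * TD f y)) := (hq.mul hq).const_mul _
  have hW : Sm 2 W := hqq.add hG
  have hWeq : ∀ y, y ≠ 0 → cylGradSq α f y = (‖y‖ ^ 2) ^ (-1 : ℝ) * W y := by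
    intro y hy
    rw [cylGradSq_eq α f hy, inv_norm_sq_eq, hWdef]; ring
  have hTW : ∀ y, y ≠ 0 → TD W y
      = 2 * α ^ 2 * (TD f y * TD (TD f) y) + 2 * Gam f (TD f) y := by
    intro y hy
    rw [hWdef, TD_add (hqq.of_le (by norm_num)) (hG.of_le (by norm_num)) hy,
      TD_const_mul (hq1.mul hq1) _ hy, TD_mul hq1 hq1 hy, TD_Gam hf2 hf2 hy, Gam_comm (TD f) f]
    ring
  have hTTW : TD (TD W) x = 2 * α ^ 2 * (TD (TD f) x * TD (TD f) x + TD f x * TD (TD (TD f)) x)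
      + 2 * (Gam (TD f) (TD f) x + Gam f (TD (TD f)) x) := by
    rw [TD_congr hTW hx, TD_add ((hq1.mul hw).const_mul _) ((hf2.Gam hq).const_mul _) hx,
      TD_const_mul (hq1.mul hw) _ hx, TD_mul hq1 hw hx, TD_const_mul (hf2.Gam hq) _ hx,
      TD_Gam hf2 hq hx]
  have hLW : LS W x = α ^ 2 * (2 * TD f x * LS (TD f) x + 2 * Gam (TD f) (TD f) x)
      + LS (Gam f f) x := by
    rw [hWdef, LS_add hqq hG hx, LS_const_mul (hq.mul hq) _ hx, LS_mul hq hq hx]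
    ring
  have hLgrad : cylL α n (cylGradSq α f) x = ((‖x‖ ^ 2)⁻¹) ^ 2 *
      (α ^ 2 * (TD (TD W) x + (n - 6) * TD W x + (8 - 2 * n) * W x) + LS W x) := by
    have hc : Sm 2 (cylGradSq α f) := ((Sm_radial (-1)).mul hW).congr hWeq
    rw [cylL_eq α n hc hx, TD_TD_congr hWeq hx, TD_congr hWeq hx, LS_congr hWeq hx,
      TD_TD_radial_mul hW _ hx, TD_radial_mul (hW.of_le (by norm_num)) _ hx,
      LS_radial_mul hW _ hx, ← inv_norm_sq_eq]
    ring
  set Z : Euc d → ℝ := fun y => α ^ 2 * (TD (TD f) y + (n - 2) * TD f y) + LS f y with hZdef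
  have hz1 : Sm 1 (fun y => TD (TD f) y + (n - 2) * TD f y) := hw.add (hq1.const_mul _)
  have hZ : Sm 1 Z := (hz1.const_mul _).add hY
  have hZeq : ∀ y, y ≠ 0 → cylL α n f y = (‖y‖ ^ 2) ^ (-1 : ℝ) * Z y := by
    intro y hy
    rw [cylL_eq α n hf2 hy, inv_norm_sq_eq]
  have hTZ : TD Z x = α ^ 2 * (TD (TD (TD f)) x + (n - 2) * TD (TD f) x) + LS (TD f) x := by
    rw [hZdef, TD_add (hz1.const_mul _) hY hx, TD_const_mul hz1 _ hx,
      TD_add hw (hq1.const_mul _) hx, TD_const_mul hq1 _ hx, TD_LS hf hx]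
  have hGZ : Gam f Z x = α ^ 2 * (Gam f (TD (TD f)) x + (n - 2) * Gam f (TD f) x)
      + Gam f (LS f) x := by
    rw [hZdef, Gam_add_right (hz1.const_mul _) hY f hx, Gam_const_mul_right hz1 _ f hx,
      Gam_add_right hw (hq1.const_mul _) f hx, Gam_const_mul_right hq1 _ f hx]
  have hinner : cylInnerD α f (cylL α n f) x = ((‖x‖ ^ 2)⁻¹) ^ 2 *
      (α ^ 2 * TD f x * (TD Z x - 2 * Z x) + Gam f Z x) := by
    rw [cylInnerD_eq α _ _ hx, TD_congr hZeq hx, Gam_congr_right hZeq f hx,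
      TD_radial_mul hZ _ hx, Gam_radial_mul_right hZ _ f hx, ← inv_norm_sq_eq]
    ring
  rw [bochK, hLgrad, hinner, hZeq x hx, ← inv_norm_sq_eq, hTTW, hTW x hx, hLW, hTZ, hGZ,
    show W x = α ^ 2 * (TD f x * TD f x) + Gam f f x from rfl,
    show Z x = α ^ 2 * (TD (TD f) x + (n - 2) * TD f x) + LS f x from rfl]
  have hn1' : n - 1 ≠ 0 := sub_ne_zero.2 hn1
  field_simp
  ring

end bochner

/-! ### Bochner formula on the sphere -/

section sphere
variable {d : ℕ} {f : Euc d → ℝ} {x : Euc d}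

/-- Structure equations of `so(d)`. -/
lemma RD_RD_comm (hf : Sm 2 f) (hx : x ≠ 0) (i j k l : Fin d) :
    RD (i, j) (RD (k, l) f) x = RD (k, l) (RD (i, j) f) x
      + (((if j = k then 1 else 0) * RD (i, l) f x + (-(if i = k then 1 else 0)) * RD (j, l) f x)
      + ((-(if j = l then 1 else 0)) * RD (i, k) f x + (if i = l then 1 else 0) * RD (j, k) f x)) := by
  rw [RD_RD_apply hf hx, RD_RD_apply hf hx]
  simp only [RD_apply, hm_symm hf hx j k, hm_symm hf hx j l, hm_symm hf hx i k, hm_symm hf hx i l,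
    @eq_comm _ k j, @eq_comm _ l j, @eq_comm _ k i, @eq_comm _ l i]
  ring

lemma RD_RD_antisymm_left (hf : Sm 2 f) (hx : x ≠ 0) (i j k l : Fin d) :
    RD (j, i) (RD (k, l) f) x = - RD (i, j) (RD (k, l) f) x := by
  rw [RD_RD_apply hf hx, RD_RD_apply hf hx]; ring

lemma RD_RD_antisymm_right (hf : Sm 2 f) (hx : x ≠ 0) (i j k l : Fin d) :
    RD (i, j) (RD (l, k) f) x = - RD (i, j) (RD (k, l) f) x := by
  rw [RD_RD_apply hf hx, RD_RD_apply hf hx]; ring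

/-- The Casimir operator `Δ_θ` commutes with rotations. -/
lemma LS_RD_comm (hf : Sm 3 f) (b : Fin d × Fin d) (hx : x ≠ 0) :
    RD b (LS f) x = LS (RD b f) x := by
  obtain ⟨k, l⟩ := b
  have hf2 : Sm 2 f := hf.of_le (by norm_num)
  have hR (a : Fin d × Fin d) : Sm 2 (RD a f) := hf.RD a
  have hR1 (a : Fin d × Fin d) : Sm 1 (RD a f) := hf2.RD a
  have h1 : RD (k, l) (LS f) x = 1 / 2 * ∑ a, RD (k, l) (RD a (RD a f)) x :=
    LD_half_sum (fun a => (hR a).RD a) _ hx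
  have h2 (i j : Fin d) : RD (i, j) (RD (i, j) (RD (k, l) f)) x
      = RD (k, l) (RD (i, j) (RD (i, j) f)) x
      + ((if j = k then 1 else 0) * (RD (i, j) (RD (i, l) f) x + RD (i, l) (RD (i, j) f) x)
        - (if i = k then 1 else 0) * (RD (i, j) (RD (j, l) f) x + RD (j, l) (RD (i, j) f) x)
        - (if j = l then 1 else 0) * (RD (i, j) (RD (i, k) f) x + RD (i, k) (RD (i, j) f) x)
        + (if i = l then 1 else 0) * (RD (i, j) (RD (j, k) f) x + RD (j, k) (RD (i, j) f) x)) := by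
    rw [RD_congr (fun y hy => RD_RD_comm hf2 hy i j k l) _ hx,
      RD_add ((hR _).RD _) ((((hR1 _).const_mul _).add ((hR1 _).const_mul _)).add
        (((hR1 _).const_mul _).add ((hR1 _).const_mul _))) _ hx,
      RD_add (((hR1 _).const_mul _).add ((hR1 _).const_mul _))
        (((hR1 _).const_mul _).add ((hR1 _).const_mul _)) _ hx,
      RD_add ((hR1 _).const_mul _) ((hR1 _).const_mul _) _ hx,
      RD_add ((hR1 _).const_mul _) ((hR1 _).const_mul _) _ hx,
      RD_const_mul (hR1 _) _ _ hx, RD_const_mul (hR1 _) _ _ hx, RD_const_mul (hR1 _) _ _ hx,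
      RD_const_mul (hR1 _) _ _ hx, RD_RD_comm (hR (i, j)) hx i j k l]
    ring
  rw [h1, LS, Fintype.sum_prod_type, Fintype.sum_prod_type]
  congr 1
  simp only [h2, Finset.sum_add_distrib, Finset.sum_sub_distrib]
  rw [Finset.sum_comm (f := fun i j => (if i = k then (1 : ℝ) else 0) * _),
    Finset.sum_comm (f := fun i j => (if i = l then (1 : ℝ) else 0) * _)]
  simp only [ite_mul, one_mul, zero_mul, Finset.sum_ite_eq', Finset.mem_univ,
    if_true]
  rw [eq_comm, add_eq_left, ← Finset.sum_sub_distrib, ← Finset.sum_sub_distrib,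
    ← Finset.sum_add_distrib]
  refine Finset.sum_eq_zero fun i _ => ?_
  rw [RD_RD_antisymm_left hf2 hx i k i l, RD_RD_antisymm_right hf2 hx i l i k,
    RD_RD_antisymm_left hf2 hx i l i k, RD_RD_antisymm_right hf2 hx i k i l]
  ring

/-- The spherical Bochner quantity is the sum of squares of the iterated angular derivatives. -/
lemma bochner_sphere (hf : Sm 3 f) (hx : x ≠ 0) :
    1 / 2 * LS (Gam f f) x - Gam f (LS f) x
      = 1 / 2 * ∑ b, 1 / 2 * ∑ a, RD a (RD b f) x ^ 2 := by
  have hR (a : Fin d × Fin d) : Sm 2 (RD a f) := hf.RD a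
  have h1 : LS (Gam f f) x = ∑ b, (RD b f x * LS (RD b f) x + 1 / 2 * ∑ a, RD a (RD b f) x ^ 2) := by
    have e1 : LS (Gam f f) x = 1 / 2 * LS (fun y => ∑ b, RD b f y * RD b f y) x :=
      LS_const_mul (Sm.sum fun b => (hR b).mul (hR b)) _ hx
    have e2 : LS (fun y => ∑ b, RD b f y * RD b f y) x
        = ∑ b, LS (fun y => RD b f y * RD b f y) x := by
      have e3 (a : Fin d × Fin d) : RD a (RD a fun y => ∑ b, RD b f y * RD b f y) x
          = ∑ b, RD a (RD a fun y => RD b f y * RD b f y) x := by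
        have h2 (b : Fin d × Fin d) : Sm 2 fun y => RD b f y * RD b f y := (hR b).mul (hR b)
        have h3 (y : Euc d) (hy : y ≠ 0) : RD a (fun y => ∑ b, RD b f y * RD b f y) y
            = ∑ b, RD a (fun y => RD b f y * RD b f y) y := LD_sum h2 (by norm_num) hy
        rw [RD_congr h3 a hx]
        exact LD_sum (k := 1) (fun b => (h2 b).RD a) le_rfl hx
      simp only [LS, e3, ← Finset.mul_sum]
      rw [Finset.sum_comm]
    rw [e1, e2, Finset.mul_sum]
    refine Finset.sum_congr rfl fun b _ => ?_
    rw [LS_mul (hR b) (hR b) hx, Gam]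
    simp only [sq]
    ring
  rw [h1, Gam, Finset.sum_add_distrib]
  simp only [LS_RD_comm hf _ hx]
  ring

end sphere

/-! ### The pointwise inequality on the sphere -/

section pointwise
variable {d : ℕ} {f : Euc d → ℝ} {x : Euc d}

/-- Coordinates of `∇²f · x`. -/
def hx1 {d : ℕ} (f : Euc d → ℝ) (x : Euc d) (j : Fin d) : ℝ := ∑ l, x l * hm f x l j

/-- Coordinates of `∇²f · ∇f`. -/
def hg1 {d : ℕ} (f : Euc d → ℝ) (x : Euc d) (j : Fin d) : ℝ := ∑ l, gv f x l * hm f x l j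

/-- Euclidean derivatives of `RD b f`, in coordinates. -/
def Vb {d : ℕ} (f : Euc d → ℝ) (x : Euc d) (b : Fin d × Fin d) (l : Fin d) : ℝ :=
  x b.1 * hm f x l b.2 - x b.2 * hm f x l b.1
    + ((if b.1 = l then 1 else 0) * gv f x b.2 - (if b.2 = l then 1 else 0) * gv f x b.1)

lemma RD_RD_Vb (hf : Sm 2 f) (hx : x ≠ 0) (a b : Fin d × Fin d) :
    RD a (RD b f) x = x a.1 * Vb f x b a.2 - x a.2 * Vb f x b a.1 := by
  obtain ⟨k, l⟩ := a
  obtain ⟨i, j⟩ := b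
  rw [RD_RD_apply hf hx]
  rfl

lemma sum_mul_Vb (p : Fin d → ℝ) (b : Fin d × Fin d) :
    ∑ l, p l * Vb f x b l = x b.1 * (∑ l, p l * hm f x l b.2) - x b.2 * (∑ l, p l * hm f x l b.1)
      + (p b.1 * gv f x b.2 - p b.2 * gv f x b.1) := by
  have h (l : Fin d) : p l * Vb f x b l = x b.1 * (p l * hm f x l b.2)
      - x b.2 * (p l * hm f x l b.1) + ((if b.1 = l then p l * gv f x b.2 else 0)
      - (if b.2 = l then p l * gv f x b.1 else 0)) := by
    simp only [Vb]
    split_ifs <;> ring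
  simp only [h, Finset.sum_add_distrib, Finset.sum_sub_distrib, ← Finset.mul_sum,
    Finset.sum_ite_eq, Finset.mem_univ, if_true]

lemma TD_coord : ∑ i, x i * gv f x i = TD f x := TD_apply.symm

lemma sum_hx1_gv (hf : Sm 2 f) (hx : x ≠ 0) :
    ∑ i, x i * hg1 f x i = ∑ i, hx1 f x i * gv f x i := by
  simp only [hx1, hg1, Finset.mul_sum, Finset.sum_mul]
  rw [Finset.sum_comm]
  refine Finset.sum_congr rfl fun i _ => Finset.sum_congr rfl fun j _ => ?_
  rw [hm_symm hf hx i j]; ring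

lemma sum_sq_Vb (hf : Sm 2 f) (hx : x ≠ 0) (l : Fin d) :
    1 / 2 * ∑ b, Vb f x b l * Vb f x b l =
      ‖x‖ ^ 2 * (∑ j, hm f x l j * hm f x l j) - hx1 f x l * hx1 f x l
      + 2 * (x l * (∑ j, hm f x l j * gv f x j) - TD f x * hm f x l l)
      + ((∑ j, gv f x j * gv f x j) - gv f x l * gv f x l) := by
  have h (b : Fin d × Fin d) : Vb f x b l * Vb f x b l =
      (x b.1 * hm f x l b.2 - x b.2 * hm f x l b.1) * (x b.1 * hm f x l b.2 - x b.2 * hm f x l b.1)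
      + 2 * ((x b.1 * hm f x l b.2 - x b.2 * hm f x l b.1) * ((if b.1 = l then (1 : ℝ) else 0)
        * gv f x b.2 - (if b.2 = l then 1 else 0) * gv f x b.1))
      + ((if b.1 = l then (1 : ℝ) else 0) * gv f x b.2 - (if b.2 = l then 1 else 0) * gv f x b.1)
        * ((if b.1 = l then (1 : ℝ) else 0) * gv f x b.2 - (if b.2 = l then 1 else 0) * gv f x b.1)
      := by simp only [Vb]; ring
  simp only [h, Finset.sum_add_distrib, ← Finset.mul_sum]
  have l1 := lagrange (fun i => x i) (fun i => hm f x l i) (fun i => x i) (fun i => hm f x l i)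
  have l2 := lagrange (fun i => x i) (fun i => hm f x l i) (fun i => if i = l then (1 : ℝ) else 0)
    (fun i => gv f x i)
  have l3 := lagrange (fun i => if i = l then (1 : ℝ) else 0) (fun i => gv f x i)
    (fun i => if i = l then (1 : ℝ) else 0) (fun i => gv f x i)
  have hk : ∑ i, x i * hm f x l i = hx1 f x l := by
    simp only [hx1, hm_symm hf hx l]
  have hk' : ∑ i, hm f x l i * x i = hx1 f x l := by
    rw [← hk]; exact Finset.sum_congr rfl fun i _ => mul_comm _ _
  simp only [mul_ite, ite_mul, mul_one, mul_zero, one_mul, zero_mul, Finset.sum_ite_eq',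
    Finset.mem_univ, if_true, hk, hk', TD_coord, ← norm_sq_coord] at l1 l2 l3 ⊢
  linarith

/-- The spherical Bochner quantity in Euclidean coordinates. -/
lemma Gam2_apply (hf : Sm 3 f) (hx : x ≠ 0) :
    1 / 2 * LS (Gam f f) x - Gam f (LS f) x =
      ‖x‖ ^ 2 * ((d : ℝ) - 2) * (∑ i, gv f x i * gv f x i)
      + (‖x‖ ^ 2) ^ 2 * (∑ i, ∑ j, hm f x i j * hm f x i j)
      - 2 * ‖x‖ ^ 2 * (∑ i, hx1 f x i * hx1 f x i)
      - 2 * ‖x‖ ^ 2 * (∑ i, hm f x i i) * TD f x + (TD f x + ∑ i, x i * hx1 f x i) ^ 2 := by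
  have hf2 : Sm 2 f := hf.of_le (by norm_num)
  have h1 (b : Fin d × Fin d) : 1 / 2 * ∑ a, RD a (RD b f) x ^ 2
      = ‖x‖ ^ 2 * (∑ l, Vb f x b l * Vb f x b l)
      - (x b.1 * (hx1 f x b.2 + gv f x b.2) - x b.2 * (hx1 f x b.1 + gv f x b.1))
       * (x b.1 * (hx1 f x b.2 + gv f x b.2) - x b.2 * (hx1 f x b.1 + gv f x b.1)) := by
    have l1 := lagrange (fun i => x i) (Vb f x b) (fun i => x i) (Vb f x b)
    have c : ∑ i, Vb f x b i * x i = ∑ i, x i * Vb f x b i :=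
      Finset.sum_congr rfl fun i _ => mul_comm _ _
    simp only [RD_RD_Vb hf2 hx, sq (_ - _)]
    have v := sum_mul_Vb (f := f) (x := x) (fun i => x i) b
    rw [l1, c, v, ← norm_sq_coord]
    simp only [hx1]
    ring
  rw [bochner_sphere hf hx]
  simp only [h1, Finset.sum_sub_distrib, ← Finset.mul_sum]
  rw [Finset.sum_comm, mul_sub, mul_left_comm, Finset.mul_sum]
  simp only [sum_sq_Vb hf2 hx, Finset.sum_add_distrib, Finset.sum_sub_distrib, ← Finset.mul_sum]
  have l2 := lagrange (fun i => x i) (fun i => hx1 f x i + gv f x i) (fun i => x i)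
    (fun i => hx1 f x i + gv f x i)
  have e1 : ∑ i, x i * (hx1 f x i + gv f x i) = (∑ i, x i * hx1 f x i) + TD f x := by
    simp only [mul_add, Finset.sum_add_distrib, TD_coord]
  have e2 : ∑ i, (hx1 f x i + gv f x i) * x i = (∑ i, x i * hx1 f x i) + TD f x := by
    rw [← e1]; exact Finset.sum_congr rfl fun i _ => mul_comm _ _
  have e3 : ∑ i, (hx1 f x i + gv f x i) * (hx1 f x i + gv f x i) = (∑ i, hx1 f x i * hx1 f x i)
      + 2 * (∑ i, hx1 f x i * gv f x i) + ∑ i, gv f x i * gv f x i := by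
    rw [Finset.mul_sum, ← Finset.sum_add_distrib, ← Finset.sum_add_distrib]
    exact Finset.sum_congr rfl fun i _ => by ring
  have e4 : ∑ i, x i * ∑ j, hm f x i j * gv f x j = ∑ i, hx1 f x i * gv f x i := by
    simp only [hx1, Finset.mul_sum, Finset.sum_mul]
    rw [Finset.sum_comm]
    exact Finset.sum_congr rfl fun i _ => Finset.sum_congr rfl fun j _ => by ring
  rw [e1, e2, e3, ← norm_sq_coord] at l2
  rw [l2, e4]
  simp only [Finset.sum_const, Finset.card_univ, Fintype.card_fin, nsmul_eq_mul]
  ring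

/-- The Hessian term `∇²_θ f (∇_θ f, ∇_θ f)` in Euclidean coordinates. -/
lemma Hess_apply (hf : Sm 3 f) (hx : x ≠ 0) :
    1 / 2 * Gam f (Gam f f) x =
      (‖x‖ ^ 2) ^ 2 * (∑ i, gv f x i * hg1 f x i)
      - 2 * ‖x‖ ^ 2 * TD f x * (∑ i, hx1 f x i * gv f x i)
      + TD f x ^ 2 * (∑ i, x i * hx1 f x i) - TD f x * Gam f f x := by
  have hf2 : Sm 2 f := hf.of_le (by norm_num)
  let w : Fin d → ℝ := fun j => ‖x‖ ^ 2 * hg1 f x j - TD f x * hx1 f x j - TD f x * gv f x j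
  have h1 (b : Fin d × Fin d) : 1 / 2 * ∑ a, RD a f x * RD a (RD b f) x
      = x b.1 * w b.2 - x b.2 * w b.1 := by
    have l1 := lagrange (fun i => x i) (gv f x) (fun i => x i) (Vb f x b)
    have c : ∑ i, gv f x i * x i = TD f x := by
      rw [← TD_coord]; exact Finset.sum_congr rfl fun i _ => mul_comm _ _
    have r (a : Fin d × Fin d) : RD a f x = x a.1 * gv f x a.2 - x a.2 * gv f x a.1 := RD_apply _ _
    simp only [RD_RD_Vb hf2 hx, r]
    rw [l1, c, sum_mul_Vb, sum_mul_Vb, ← norm_sq_coord]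
    simp only [w, hx1, hg1]
    ring
  have h2 : 1 / 2 * Gam f (Gam f f) x
      = 1 / 2 * ∑ b, RD b f x * (1 / 2 * ∑ a, RD a f x * RD a (RD b f) x) := by
    have h3 (a : Fin d × Fin d) : RD a (Gam f f) x = ∑ b, RD b f x * RD a (RD b f) x :=
      RD_Gam_self hf2 a hx
    rw [Gam]
    simp only [h3, Finset.mul_sum]
    rw [Finset.sum_comm]
    exact Finset.sum_congr rfl fun i _ => Finset.sum_congr rfl fun j _ => by ring
  have l2 := lagrange (fun i => x i) (gv f x) (fun i => x i) w
  have c : ∑ i, gv f x i * x i = TD f x := by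
    rw [← TD_coord]; exact Finset.sum_congr rfl fun i _ => mul_comm _ _
  have e1 : ∑ i, gv f x i * w i = ‖x‖ ^ 2 * (∑ i, gv f x i * hg1 f x i)
      - TD f x * (∑ i, hx1 f x i * gv f x i) - TD f x * ∑ i, gv f x i * gv f x i := by
    simp only [w, Finset.mul_sum, ← Finset.sum_sub_distrib]
    exact Finset.sum_congr rfl fun i _ => by ring
  have e2 : ∑ i, x i * w i = ‖x‖ ^ 2 * (∑ i, hx1 f x i * gv f x i)
      - TD f x * (∑ i, x i * hx1 f x i) - TD f x * TD f x := by
    rw [← sum_hx1_gv hf2 hx, ← TD_coord (f := f) (x := x)]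
    simp only [w, Finset.mul_sum, ← Finset.sum_sub_distrib]
    rw [TD_coord]
    exact Finset.sum_congr rfl fun i _ => by ring
  have r (a : Fin d × Fin d) : RD a f x = x a.1 * gv f x a.2 - x a.2 * gv f x a.1 := RD_apply _ _
  rw [h2]
  simp only [h1]
  simp only [r]
  rw [l2, c, e1, e2, ← norm_sq_coord, Gam_apply]
  ring

/-- Expansion of the squared norm of a modified Hessian. The vector `t` plays the role of the
tangential gradient, so it is orthogonal to `x`. -/
lemma sum_sq_expand (h : Fin d → Fin d → ℝ) (hs : ∀ i j, h i j = h j i) (x k t : Fin d → ℝ)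
    (hk : ∀ j, ∑ l, x l * h l j = k j) (hxt : ∑ i, x i * t i = 0) (R γ c e : ℝ) :
    ∑ i, ∑ j, (R * h i j - (x i * k j + k i * x j) + γ * (x i * x j)
      + c * (if i = j then 1 else 0) + e * (t i * t j)) ^ 2 =
    R ^ 2 * (∑ i, ∑ j, h i j * h i j)
    + 2 * ((∑ i, x i * x i) * (∑ i, k i * k i) + (∑ i, x i * k i) ^ 2)
    + γ ^ 2 * (∑ i, x i * x i) ^ 2 + c ^ 2 * d + e ^ 2 * (∑ i, t i * t i) ^ 2
    + 2 * (-2 * R * (∑ i, k i * k i) + R * γ * (∑ i, x i * k i) + R * c * (∑ i, h i i)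
      + R * e * (∑ i, t i * ∑ j, t j * h j i) - 2 * γ * (∑ i, x i * x i) * (∑ i, x i * k i)
      - 2 * c * (∑ i, x i * k i) + γ * c * (∑ i, x i * x i) + c * e * (∑ i, t i * t i)) := by
  have H (i j : Fin d) : (R * h i j - (x i * k j + k i * x j) + γ * (x i * x j)
      + c * (if i = j then 1 else 0) + e * (t i * t j)) ^ 2 =
      R ^ 2 * (h i j * h i j) + (x i * x i * (k j * k j) + k i * k i * (x j * x j)
      + 2 * (x i * k i * (x j * k j))) + γ ^ 2 * (x i * x i * (x j * x j))
      + (if i = j then c ^ 2 + 2 * R * c * h i i - 4 * c * (x i * k i) + 2 * γ * c * (x i * x i)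
        + 2 * c * e * (t i * t i) else 0)
      + e ^ 2 * (t i * t i * (t j * t j))
      + (-2 * R) * (x i * h i j * k j) + (-2 * R) * (k i * (x j * h j i))
      + 2 * R * γ * (x i * (x j * h j i)) + 2 * R * e * (t i * (t j * h j i))
      + (-2 * γ) * (x i * x i * (x j * k j)) + (-2 * γ) * (x i * k i * (x j * x j))
      + (-2 * e) * (x i * t i * (k j * t j)) + (-2 * e) * (k i * t i * (x j * t j))
      + 2 * γ * e * (x i * t i * (x j * t j)) := by
    by_cases hij : i = j
    · subst hij; simp only [if_true]; ring
    · simp only [hij, if_false, hs j i]; ring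
  have e1 : ∑ i, ∑ j, x i * h i j * k j = ∑ j, k j * k j := by
    rw [Finset.sum_comm]
    exact Finset.sum_congr rfl fun j _ => by rw [← Finset.sum_mul, hk]
  simp only [H, Finset.sum_add_distrib, ← Finset.mul_sum, ← Finset.sum_mul, Finset.sum_sub_distrib,
    Finset.sum_ite_eq, Finset.mem_univ, if_true, hk, hxt, e1, Finset.sum_const, Finset.card_univ,
    Fintype.card_fin, nsmul_eq_mul]
  ring

/-- Nonnegativity of the squared norm of the trace-free part of
`∇²_θ f - τ ∇_θ f ⊗ ∇_θ f`, written intrinsically. On the round sphere the Ricci curvature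
contributes the term `(d - 2) |∇_θ f|²`. -/
lemma pointwise_sphere (hd : 2 ≤ d) (hf : Sm 3 f) (hx : x ≠ 0) (τ : ℝ) :
    0 ≤ (1 / 2 * LS (Gam f f) x - Gam f (LS f) x) - ((d : ℝ) - 2) * Gam f f x
      - LS f x ^ 2 / ((d : ℝ) - 1)
      - 2 * τ * (1 / 2 * Gam f (Gam f f) x - LS f x * Gam f f x / ((d : ℝ) - 1))
      + τ ^ 2 * (1 - 1 / ((d : ℝ) - 1)) * Gam f f x ^ 2 := by
  have hf2 : Sm 2 f := hf.of_le (by norm_num)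
  have hR : 0 < ‖x‖ ^ 2 := norm_sq_pos x hx
  have hd2 : (2 : ℝ) ≤ d := by exact_mod_cast hd
  have hm0 : (d : ℝ) - 1 ≠ 0 := by linarith
  rw [Gam2_apply hf hx, Hess_apply hf hx]
  have hY := LS_apply hf2 hx
  have hTT := TD_TD_apply hf2 hx
  have hG : Gam f f x = _ := Gam_apply (f := f) (g := f) (x := x)
  have hxk : ∑ i, x i * hx1 f x i = ∑ i, ∑ j, x i * x j * hm f x i j := by
    simp only [hx1, Finset.mul_sum]
    exact Finset.sum_congr rfl fun i _ => Finset.sum_congr rfl fun j _ => by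
      rw [hm_symm hf2 hx i j]; ring
  rw [← hxk] at hTT
  set R := ‖x‖ ^ 2 with hRdef
  set s := TD f x
  set Γ := Gam f f x
  set Y := LS f x
  -- The choice of `γ0` makes the matrix in `hpos` trace free, that of the coefficient of
  -- `x_i x_j` makes it annihilate the radial direction.
  set γ0 := (-s - Y / ((d : ℝ) - 1) + τ * Γ / ((d : ℝ) - 1)) with hc
  let t : Fin d → ℝ := fun i => R * gv f x i - s * x i
  have hxx : ∑ i, x i * x i = R := (norm_sq_coord x).symm
  have hxt : ∑ i, x i * t i = 0 := by
    have : ∑ i, x i * t i = R * (∑ i, x i * gv f x i) - s * ∑ i, x i * x i := by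
      simp only [t, Finset.mul_sum, ← Finset.sum_sub_distrib]
      exact Finset.sum_congr rfl fun i _ => by ring
    rw [this, TD_coord, hxx]; ring
  have htt : ∑ i, t i * t i = R * Γ := by
    have : ∑ i, t i * t i = R ^ 2 * (∑ i, gv f x i * gv f x i)
        - 2 * R * s * (∑ i, x i * gv f x i) + s ^ 2 * ∑ i, x i * x i := by
      simp only [t, Finset.mul_sum, ← Finset.sum_sub_distrib, ← Finset.sum_add_distrib]
      exact Finset.sum_congr rfl fun i _ => by ring
    rw [this, TD_coord, hxx, hG]; ring
  have hth : ∑ i, t i * ∑ j, t j * hm f x j i = R ^ 2 * (∑ i, gv f x i * hg1 f x i)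
      - 2 * R * s * (∑ i, hx1 f x i * gv f x i) + s ^ 2 * (∑ i, x i * hx1 f x i) := by
    have h1 (i : Fin d) : ∑ j, t j * hm f x j i = R * hg1 f x i - s * hx1 f x i := by
      simp only [t, hg1, hx1, Finset.mul_sum, ← Finset.sum_sub_distrib]
      exact Finset.sum_congr rfl fun i _ => by ring
    have h2 : ∑ i, t i * (R * hg1 f x i - s * hx1 f x i) = R ^ 2 * (∑ i, gv f x i * hg1 f x i)
        - R * s * (∑ i, hx1 f x i * gv f x i) - R * s * (∑ i, x i * hg1 f x i)
        + s ^ 2 * (∑ i, x i * hx1 f x i) := by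
      simp only [t, Finset.mul_sum, ← Finset.sum_sub_distrib, ← Finset.sum_add_distrib]
      exact Finset.sum_congr rfl fun i _ => by ring
    simp only [h1]
    rw [h2, sum_hx1_gv hf2 hx]; ring
  have E := sum_sq_expand (hm f x) (hm_symm hf2 hx) (fun i => x i) (hx1 f x) t
    (fun _ => rfl) hxt R ((∑ i, x i * hx1 f x i) / R - γ0 / R) γ0 (-τ / R)
  have hpos : (0 : ℝ) ≤ ∑ i, ∑ j, (R * hm f x i j - (x i * hx1 f x j + hx1 f x i * x j)
      + ((∑ i, x i * hx1 f x i) / R - γ0 / R) * (x i * x j)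
      + γ0 * (if i = j then 1 else 0) + (-τ / R) * (t i * t j)) ^ 2 :=
    Finset.sum_nonneg fun i _ => Finset.sum_nonneg fun j _ => sq_nonneg _
  rw [E, hxx, htt, hth] at hpos
  set xk := ∑ i, x i * hx1 f x i
  set hh := ∑ i, ∑ j, hm f x i j * hm f x i j
  set kk := ∑ i, hx1 f x i * hx1 f x i
  set tr := ∑ i, hm f x i i
  set gg := ∑ i, gv f x i * gv f x i
  set gk := ∑ i, hx1 f x i * gv f x i
  set hgg := ∑ i, gv f x i * hg1 f x i
  have hRtr : R * tr = Y + xk + ((d : ℝ) - 1) * s := by rw [hY, hTT]; ring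
  have hRgg : R * gg = Γ + s * s := by rw [hG]; ring
  refine hpos.trans (le_of_eq ?_)
  have hR0 : R ≠ 0 := hR.ne'
  clear_value R s Γ Y xk hh kk tr gg gk hgg
  have htr : tr = (Y + xk + ((d : ℝ) - 1) * s) / R := by field_simp; linarith
  have hgg' : gg = (Γ + s * s) / R := by field_simp; linarith
  rw [htr, hgg', hc]
  field_simp
  ring

end pointwise

/-! ### Rotation-invariant measures -/

section measure
variable {d : ℕ} {x : Euc d}

/-- The closed annulus `ε ≤ |x| ≤ ρ`. -/
def annulus (d : ℕ) (ε ρ : ℝ) : Set (Euc d) := {x | ε ≤ ‖x‖ ∧ ‖x‖ ≤ ρ}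

/-- A finite measure carried by an annulus and invariant under linear isometries. -/
structure RadMeas {d : ℕ} (ν : Measure (Euc d)) : Prop where
  fin : IsFiniteMeasure ν
  supp : ∃ ε ρ : ℝ, 0 < ε ∧ ν.restrict (annulus d ε ρ) = ν
  inv : ∀ T : Euc d →ₗᵢ[ℝ] Euc d, MeasurePreserving T ν ν

lemma isCompact_annulus (ε ρ : ℝ) : IsCompact (annulus d ε ρ) := by
  refine (isCompact_closedBall (0 : Euc d) ρ).of_isClosed_subset ?_ fun x hx => by
    simpa using hx.2
  exact (isClosed_le continuous_const continuous_norm).inter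
    (isClosed_le continuous_norm continuous_const)

lemma annulus_subset {ε : ℝ} (hε : 0 < ε) (ρ : ℝ) : annulus d ε ρ ⊆ {(0 : Euc d)}ᶜ := by
  rintro x hx rfl
  simp only [annulus, norm_zero, Set.mem_ofPred_eq] at hx
  linarith [hx.1]

variable {ν : Measure (Euc d)}

lemma RadMeas.ae_ne (hν : RadMeas ν) : ∀ᵐ x ∂ν, x ≠ 0 := by
  obtain ⟨ε, ρ, hε, h⟩ := hν.supp
  rw [← h]
  filter_upwards [ae_restrict_mem (isCompact_annulus ε ρ).measurableSet] with x hx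
  exact annulus_subset hε ρ hx

lemma RadMeas.integrable (hν : RadMeas ν) {G : Euc d → ℝ} (hG : ContinuousOn G {(0 : Euc d)}ᶜ) :
    Integrable G ν := by
  obtain ⟨ε, ρ, hε, h⟩ := hν.supp
  have := hν.fin
  rw [← h]
  exact (hG.mono (annulus_subset hε ρ)).integrableOn_compact (isCompact_annulus ε ρ)

lemma inner_rotGen_left (a : Fin d × Fin d) (x y : Euc d) :
    ⟪rotGen a x, y⟫ = - ⟪x, rotGen a y⟫ := by
  have h := inner_rotGen a (x + y)
  simp only [map_add, inner_add_left, inner_add_right, inner_rotGen] at h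
  rw [real_inner_comm]
  linarith

lemma rotGen_cube (a : Fin d × Fin d) (x : Euc d) :
    rotGen a (rotGen a (rotGen a x)) = - rotGen a x := by
  obtain ⟨i, j⟩ := a
  by_cases hij : i = j
  · subst hij; simp [rotGen_apply]
  · simp [rotGen_apply, hij, Ne.symm hij, neg_add_eq_sub]

/-- The one-parameter group of rotations generated by `rotGen a`, by Rodrigues' formula. -/
def rot (a : Fin d × Fin d) (t : ℝ) (x : Euc d) : Euc d :=
  x + sin t • rotGen a x + (1 - cos t) • rotGen a (rotGen a x)

lemma norm_rot (a : Fin d × Fin d) (t : ℝ) (x : Euc d) : ‖rot a t x‖ = ‖x‖ := by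
  have h : ‖rot a t x‖ ^ 2 = ‖x‖ ^ 2 := by
    rw [← real_inner_self_eq_norm_sq, ← real_inner_self_eq_norm_sq, rot]
    simp only [inner_add_left, inner_add_right, inner_smul_left, inner_smul_right,
      inner_rotGen_left, inner_rotGen, rotGen_cube, inner_neg_right, conj_trivial]
    linear_combination (-⟪x, rotGen a (rotGen a x)⟫) * sin_sq_add_cos_sq t
  exact (sq_eq_sq₀ (norm_nonneg _) (norm_nonneg _)).1 h

/-- `rot a t` as a linear isometry. -/
def rotIso (a : Fin d × Fin d) (t : ℝ) : Euc d →ₗᵢ[ℝ] Euc d where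
  toFun := rot a t
  map_add' x y := by simp only [rot, map_add, smul_add]; abel
  map_smul' c x := by
    simp only [rot, map_smul, smul_add, RingHom.id_apply, smul_comm c]
  norm_map' := norm_rot a t

lemma rot_ne (a : Fin d × Fin d) (t : ℝ) (hx : x ≠ 0) : rot a t x ≠ 0 := by
  rw [← norm_pos_iff, norm_rot, norm_pos_iff]; exact hx

lemma hasDerivAt_rot (a : Fin d × Fin d) (t : ℝ) (x : Euc d) :
    HasDerivAt (fun t => rot a t x) (rotGen a (rot a t x)) t := by
  have h := (((hasDerivAt_sin t).smul_const (rotGen a x)).const_add x).add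
    (((hasDerivAt_cos t).const_sub 1).smul_const (rotGen a (rotGen a x)))
  refine h.congr_deriv ?_
  simp only [rot, map_add, map_smul, rotGen_cube]
  module

lemma rot_two_pi (a : Fin d × Fin d) (x : Euc d) : rot a (2 * π) x = rot a 0 x := by
  simp [rot]

/-- Differentiation along an orbit of the rotation group. -/
lemma hasDerivAt_orbit {F : Euc d → ℝ} (hF : Sm 1 F) (a : Fin d × Fin d) (t : ℝ) (hx : x ≠ 0) :
    HasDerivAt (fun t => F (rot a t x)) (RD a F (rot a t x)) t :=
  (hF.diff le_rfl (rot_ne a t hx)).hasFDerivAt.comp_hasDerivAt t (hasDerivAt_rot a t x)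

lemma continuous_rot (a : Fin d × Fin d) : Continuous fun p : Euc d × ℝ => rot a p.2 p.1 := by
  unfold rot
  fun_prop

lemma continuous_orbit {G : Euc d → ℝ} (hG : ContinuousOn G {(0 : Euc d)}ᶜ) (a : Fin d × Fin d)
    (hx : x ≠ 0) : Continuous fun t => G (rot a t x) :=
  hG.comp_continuous ((continuous_rot a).comp (Continuous.prodMk_right x))
    fun t => rot_ne a t hx

/-- Averaging over the orbits of a rotation group does not change integrals. -/
lemma RadMeas.integral_orbit (hν : RadMeas ν) {G : Euc d → ℝ}
    (hG : ContinuousOn G {(0 : Euc d)}ᶜ) (a : Fin d × Fin d) :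
    ∫ x, (∫ t in (0 : ℝ)..2 * π, G (rot a t x)) ∂ν = 2 * π * ∫ x, G x ∂ν := by
  obtain ⟨ε, ρ, hε, h⟩ := hν.supp
  have := hν.fin
  have hpi : (0 : ℝ) ≤ 2 * π := by positivity
  have hc : ContinuousOn (fun p : Euc d × ℝ => G (rot a p.2 p.1))
      (annulus d ε ρ ×ˢ Set.Icc 0 (2 * π)) :=
    hG.comp (continuous_rot a).continuousOn
      fun p hp => rot_ne a p.2 (annulus_subset hε ρ hp.1)
  have hi : IntegrableOn (fun p : Euc d × ℝ => G (rot a p.2 p.1))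
      (annulus d ε ρ ×ˢ Set.Ioc 0 (2 * π)) (ν.prod volume) :=
    (hc.integrableOn_compact ((isCompact_annulus ε ρ).prod isCompact_Icc)).mono_set
      (Set.prod_mono le_rfl Set.Ioc_subset_Icc_self)
  have hi2 : Integrable (fun p : Euc d × ℝ => G (rot a p.2 p.1))
      (ν.prod (volume.restrict (Set.Ioc 0 (2 * π)))) := by
    rwa [IntegrableOn, ← Measure.prod_restrict, h] at hi
  simp only [intervalIntegral.integral_of_le hpi]
  rw [integral_integral_swap hi2]
  have hinv (t : ℝ) : ∫ x, G (rot a t x) ∂ν = ∫ x, G x ∂ν := by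
    have hm := hν.inv (rotIso a t)
    exact hm.integral_comp (rotIso a t).isometry.isClosedEmbedding.measurableEmbedding G
  simp only [hinv]
  simp [hpi]

/-- The rotation fields are divergence free. -/
lemma RadMeas.integral_RD (hν : RadMeas ν) {F : Euc d → ℝ} (hF : Sm 1 F) (a : Fin d × Fin d) :
    ∫ x, RD a F x ∂ν = 0 := by
  have hc : ContinuousOn (RD a F) {(0 : Euc d)}ᶜ := (Sm.RD (k := 0) hF a).continuousOn
  have h := hν.integral_orbit hc a
  have h0 : ∫ x, (∫ t in (0 : ℝ)..2 * π, RD a F (rot a t x)) ∂ν = 0 := by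
    refine integral_eq_zero_of_ae ?_
    filter_upwards [hν.ae_ne] with x hx
    rw [intervalIntegral.integral_eq_sub_of_hasDerivAt (f := fun t => F (rot a t x))
      (fun t _ => hasDerivAt_orbit hF a t hx) ((continuous_orbit hc a hx).intervalIntegrable _ _),
      rot_two_pi]
    simp
  rw [h0] at h
  have : (2 * π) ≠ 0 := by positivity
  simpa [this] using h.symm

/-- Radial densities on an annulus give rotation-invariant measures. -/
lemma radMeas_withDensity {ε ρ : ℝ} (hε : 0 < ε) {w : ℝ → ℝ} (hw : Measurable w) {C : ℝ}
    (hC : ∀ r, ε ≤ r → r ≤ ρ → w r ≤ C) :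
    RadMeas ((volume.restrict (annulus d ε ρ)).withDensity fun x => ENNReal.ofReal (w ‖x‖)) := by
  have hK := (isCompact_annulus (d := d) ε ρ).measurableSet
  have hmw : Measurable fun x : Euc d => ENNReal.ofReal (w ‖x‖) := by fun_prop
  refine ⟨?_, ⟨ε, ρ, hε, ?_⟩, fun T => ⟨T.continuous.measurable, ?_⟩⟩
  · refine isFiniteMeasure_withDensity ?_
    refine ne_of_lt ?_
    calc ∫⁻ x in annulus d ε ρ, ENNReal.ofReal (w ‖x‖)
        ≤ ∫⁻ x in annulus d ε ρ, ENNReal.ofReal C :=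
          setLIntegral_mono measurable_const fun x hx =>
            ENNReal.ofReal_le_ofReal (hC _ hx.1 hx.2)
      _ < ⊤ := by
          rw [setLIntegral_const]
          exact ENNReal.mul_lt_top ENNReal.ofReal_lt_top (isCompact_annulus ε ρ).measure_lt_top
  · rw [restrict_withDensity hK, Measure.restrict_restrict hK, Set.inter_self]
  · ext A hA
    have hTA : MeasurableSet (T ⁻¹' A) := T.continuous.measurable hA
    rw [Measure.map_apply T.continuous.measurable hA, withDensity_apply _ hTA,
      withDensity_apply _ hA, Measure.restrict_restrict hTA, Measure.restrict_restrict hA]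
    have hmp : MeasurePreserving T (volume : Measure (Euc d)) volume :=
      (T.toLinearIsometryEquiv rfl).measurePreserving
    have hpre : T ⁻¹' A ∩ annulus d ε ρ = T ⁻¹' (A ∩ annulus d ε ρ) := by
      ext y; simp [annulus]
    rw [hpre, ← hmp.setLIntegral_comp_preimage (hA.inter hK) hmw]
    simp only [LinearIsometry.norm_map]

lemma integral_radMeas {ε ρ : ℝ} (hε : 0 < ε) {w : ℝ → ℝ} (hw : Measurable w)
    (hw0 : ∀ r, 0 < r → 0 ≤ w r) (g : Euc d → ℝ) :
    ∫ x, g x ∂((volume.restrict (annulus d ε ρ)).withDensity fun x => ENNReal.ofReal (w ‖x‖))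
      = ∫ x in annulus d ε ρ, w ‖x‖ * g x := by
  have hK := (isCompact_annulus (d := d) ε ρ).measurableSet
  rw [integral_withDensity_eq_integral_toReal_smul (by fun_prop)
    (Filter.Eventually.of_forall fun x => ENNReal.ofReal_lt_top)]
  refine setIntegral_congr_fun hK fun x hx => ?_
  simp only [smul_eq_mul]
  rw [ENNReal.toReal_ofReal (hw0 _ (hε.trans_le hx.1))]

end measure

/-! ### Integral identities and the inequality in dimension at least three -/

section integral
variable {d : ℕ} {f G H : Euc d → ℝ} {x : Euc d} {ν : Measure (Euc d)}

lemma Gam_cont (hG : Sm 1 G) (hH : Sm 1 H) : ContinuousOn (Gam G H) {(0 : Euc d)}ᶜ :=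
  (Sm.Gam (k := 0) hG hH).continuousOn

/-- Integration by parts on the orbits: the divergence of `G ∇_θ H` has vanishing integral. -/
lemma integral_div (hν : RadMeas ν) (hG : Sm 1 G) (hH : Sm 2 H) :
    ∫ x, (Gam G H x + G x * LS H x) ∂ν = 0 := by
  have hH1 : Sm 1 H := hH.of_le (by norm_num)
  have hV (a : Fin d × Fin d) : Sm 1 fun x => G x * RD a H x := hG.mul (hH.RD a)
  have h (x : Euc d) (hx : x ≠ 0) : Gam G H x + G x * LS H x
      = 1 / 2 * ∑ a, RD a (fun x => G x * RD a H x) x := by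
    simp only [RD_mul hG (hH.RD _) _ hx, Gam, LS, Finset.mul_sum,
      ← Finset.sum_add_distrib]
    exact Finset.sum_congr rfl fun a _ => by ring
  have hi (a : Fin d × Fin d) : Integrable (fun x => RD a (fun x => G x * RD a H x) x) ν :=
    hν.integrable (Sm.RD (k := 0) (hV a) a).continuousOn
  calc ∫ x, (Gam G H x + G x * LS H x) ∂ν
      = ∫ x, 1 / 2 * ∑ a, RD a (fun x => G x * RD a H x) x ∂ν := by
        refine integral_congr_ae ?_
        filter_upwards [hν.ae_ne] with x hx using h x hx
    _ = 0 := by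
        rw [integral_const_mul, integral_finsetSum _ fun a _ => hi a]
        simp [hν.integral_RD (hV _)]

lemma Gam_rpow_mul_left (hf : Sm 1 f) (hpos : ∀ x, x ≠ 0 → 0 < f x) (hG : Sm 1 G) (c : ℝ)
    (hx : x ≠ 0) : Gam (fun y => f y ^ c * G y) H x
      = f x ^ c * Gam G H x + c * f x ^ (c - 1) * G x * Gam f H x := by
  have h (a : Fin d × Fin d) : RD a (fun y => f y ^ c * G y) x
      = c * f x ^ (c - 1) * RD a f x * G x + f x ^ c * RD a G x := by
    rw [RD_mul (hf.rpow hpos c) hG a hx, RD, LD_rpow hf le_rfl hpos c hx]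
    rfl
  simp only [Gam, h, Finset.mul_sum, ← Finset.sum_add_distrib]
  exact Finset.sum_congr rfl fun a _ => by ring

lemma rpow_neg_sub_one {p : ℝ} (hp : 0 < p) (N : ℝ) : p ^ (-N - 1) = p ^ (-N) / p :=
  Real.rpow_sub_one hp.ne' _

/-- The identity relating `∫ f^{-N} (Δ_θ f)²` to the Bochner term. -/
lemma identity_one (hν : RadMeas ν) (hf : Sm 3 f) (hpos : ∀ x, x ≠ 0 → 0 < f x) (N : ℝ) :
    ∫ x, f x ^ (-N) * (LS f x ^ 2 - (1 / 2 * LS (Gam f f) x - Gam f (LS f) x)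
      - N * (Gam f f x * LS f x / f x) + N * (1 / 2 * Gam f (Gam f f) x / f x)) ∂ν = 0 := by
  have hf2 : Sm 2 f := hf.of_le (by norm_num)
  have hf1 : Sm 1 f := hf.of_le (by norm_num)
  have hu : Sm 1 fun x => f x ^ (-N) := hf1.rpow hpos _
  have hΓ : Sm 2 (Gam f f) := hf.Gam hf
  have hY : Sm 1 (LS f) := Sm.LS (k := 1) hf
  have hΓ1 : Sm 1 (Gam f f) := hΓ.of_le (by norm_num)
  have huY := hu.mul hY
  have i1 := integral_div hν huY hf2
  have i2 := integral_div hν hu hΓ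
  have c1 : Integrable (fun x => Gam (fun x => f x ^ (-N) * LS f x) f x
      + f x ^ (-N) * LS f x * LS f x) ν :=
    hν.integrable ((Gam_cont huY hf1).add (huY.mul hY).continuousOn)
  have c2 : Integrable (fun x => Gam (fun x => f x ^ (-N)) (Gam f f) x
      + f x ^ (-N) * LS (Gam f f) x) ν :=
    hν.integrable ((Gam_cont hu hΓ1).add
      (hu.continuousOn.mul (Sm.LS (k := 0) hΓ).continuousOn))
  have key : ∫ x, f x ^ (-N) * (LS f x ^ 2 - (1 / 2 * LS (Gam f f) x - Gam f (LS f) x)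
      - N * (Gam f f x * LS f x / f x) + N * (1 / 2 * Gam f (Gam f f) x / f x)) ∂ν
      = ∫ x, ((Gam (fun x => f x ^ (-N) * LS f x) f x + f x ^ (-N) * LS f x * LS f x)
        - 1 / 2 * (Gam (fun x => f x ^ (-N)) (Gam f f) x + f x ^ (-N) * LS (Gam f f) x)) ∂ν := by
    refine integral_congr_ae ?_
    filter_upwards [hν.ae_ne] with x hx
    have one : Sm 1 fun _ : Euc d => (1 : ℝ) := contDiffOn_const
    have g2 := Gam_rpow_mul_left (H := Gam f f) hf1 hpos one (-N) hx
    have z : Gam (fun _ => (1 : ℝ)) (Gam f f) x = 0 := by simp [Gam, RD, LD]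
    simp only [mul_one, z] at g2
    rw [g2, Gam_rpow_mul_left hf1 hpos hY (-N) hx, rpow_neg_sub_one (hpos x hx), Gam_comm (LS f)]
    ring
  rw [key, integral_sub c1 (c2.const_mul _), integral_const_mul, i1, i2]
  simp

/-- The identity relating the Hessian term to `∫ f^{-N-2} |∇_θ f|⁴`. -/
lemma identity_two (hν : RadMeas ν) (hf : Sm 3 f) (hpos : ∀ x, x ≠ 0 → 0 < f x) (N : ℝ) :
    ∫ x, f x ^ (-N) * (Gam f f x * LS f x / f x + 2 * (1 / 2 * Gam f (Gam f f) x / f x)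
      - (N + 1) * (Gam f f x / f x) ^ 2) ∂ν = 0 := by
  have hf2 : Sm 2 f := hf.of_le (by norm_num)
  have hf1 : Sm 1 f := hf.of_le (by norm_num)
  have hu : Sm 1 fun x => f x ^ (-N - 1) := hf1.rpow hpos _
  have hΓ : Sm 1 (Gam f f) := Sm.of_le (k := 2) (hf.Gam hf) (by norm_num)
  rw [← integral_div hν (hu.mul hΓ) hf2]
  refine integral_congr_ae ?_
  filter_upwards [hν.ae_ne] with x hx
  have hp := (hpos x hx).ne'
  rw [Gam_rpow_mul_left hf1 hpos hΓ _ hx, Real.rpow_sub_one hp (-N - 1),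
    rpow_neg_sub_one (hpos x hx), Gam_comm (Gam f f)]
  field_simp
  ring

lemma cont_bochner (hf : Sm 3 f) (hpos : ∀ x, x ≠ 0 → 0 < f x) (N c1 c2 : ℝ) :
    ContinuousOn (fun x => f x ^ (-N) * ((1 / 2 * LS (Gam f f) x - Gam f (LS f) x)
      - c1 * LS f x ^ 2 - c2 * Gam f f x)) {(0 : Euc d)}ᶜ := by
  have hf1 : Sm 1 f := hf.of_le (by norm_num)
  have hΓ : Sm 2 (Gam f f) := hf.Gam hf
  have hY : Sm 1 (LS f) := Sm.LS (k := 1) hf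
  exact (hf1.rpow hpos _).continuousOn.mul
    ((((continuousOn_const.mul (Sm.LS (k := 0) hΓ).continuousOn).sub (Gam_cont hf1 hY)).sub
      (continuousOn_const.mul (hY.pow 2).continuousOn)).sub
      (continuousOn_const.mul hΓ.continuousOn))

/-- The spherical inequality for `d ≥ 3`. It is the combination of `pointwise_sphere`, for
`τ = θ / f`, with the two integral identities. -/
lemma sphere_ineq_three (hν : RadMeas ν) (hd : 3 ≤ d) (hf : Sm 3 f)
    (hpos : ∀ x, x ≠ 0 → 0 < f x) {N : ℝ} (hN : (d : ℝ) - 1 < N) :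
    0 ≤ ∫ x, f x ^ (-N) * ((1 / 2 * LS (Gam f f) x - Gam f (LS f) x) - 1 / N * LS f x ^ 2
      - (N - 1) * ((d : ℝ) - 1) / N * Gam f f x) ∂ν := by
  have hd3 : (3 : ℝ) ≤ d := by exact_mod_cast hd
  obtain ⟨m, hm⟩ : ∃ m : ℝ, m = (d : ℝ) - 1 := ⟨_, rfl⟩
  have hm2 : 2 ≤ m := by linarith
  have hmN : m < N := by linarith
  have hm1 : m - 1 ≠ 0 := by linarith
  have hN0 : N ≠ 0 := by linarith
  have hf1 : Sm 1 f := hf.of_le (by norm_num)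
  have hΓ : Sm 2 (Gam f f) := hf.Gam hf
  have hΓ1 : Sm 1 (Gam f f) := hΓ.of_le (by norm_num)
  have hY : Sm 1 (LS f) := Sm.LS (k := 1) hf
  have hinv : ContinuousOn (fun x => (f x)⁻¹) {(0 : Euc d)}ᶜ :=
    hf.continuousOn.inv₀ fun x hx => (hpos x hx).ne'
  have hu : Sm 1 fun x => f x ^ (-N) := hf1.rpow hpos _
  -- `l`, `μ` are the multipliers of the two identities and `c = 1 + l` is the resulting coefficient
  -- of the Bochner term. `l` matches the coefficient of `(Δ_θ f)²`, while `θ` and `μ` match those of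
  -- the Hessian term and of `|∇_θ f|² Δ_θ f`, so that only `|∇_θ f|⁴ / f²` is left over, with the
  -- nonnegative coefficient `hθ`.
  let l : ℝ := (N - m) / (N * (m - 1))
  let c : ℝ := m * (N - 1) / (N * (m - 1))
  let θ : ℝ := 3 * N * l * m / (2 * c * (m + 2))
  let μ : ℝ := N * l * (m - 1) / (m + 2)
  have hc : 0 < c := by
    have : 0 < m * (N - 1) := by nlinarith
    have : 0 < N * (m - 1) := by nlinarith
    positivity
  have hθ : c * θ ^ 2 * (1 - 1 / m) ≤ (N + 1) * μ := by
    have e : (N + 1) * μ - c * θ ^ 2 * (1 - 1 / m)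
        = (N - m) * (4 * (m + 2) * (N ^ 2 - 1) - 9 * N * (N - m))
          / (4 * (m + 2) ^ 2 * (N - 1)) := by
      have : N - 1 ≠ 0 := by linarith
      have : m ≠ 0 := by linarith
      have : m + 2 ≠ 0 := by linarith
      simp only [μ, θ, c, l]
      field_simp
      ring
    have h1 : 0 ≤ 4 * (m + 2) * (N ^ 2 - 1) - 9 * N * (N - m) := by nlinarith
    have : 0 < N - 1 := by linarith
    have h2 : 0 ≤ (N - m) * (4 * (m + 2) * (N ^ 2 - 1) - 9 * N * (N - m))
          / (4 * (m + 2) ^ 2 * (N - 1)) :=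
      div_nonneg (mul_nonneg (by linarith) h1) (by positivity)
    linarith
  have i0 := hν.integrable (cont_bochner hf hpos N (1 / N) ((N - 1) * ((d : ℝ) - 1) / N))
  have i1 : Integrable (fun x => f x ^ (-N) * (LS f x ^ 2
      - (1 / 2 * LS (Gam f f) x - Gam f (LS f) x)
      - N * (Gam f f x * LS f x / f x) + N * (1 / 2 * Gam f (Gam f f) x / f x))) ν := by
    refine hν.integrable (hu.continuousOn.mul ?_)
    simp only [div_eq_mul_inv _ (f _)]
    exact (((hY.pow 2).continuousOn.sub ((continuousOn_const.mul
      (Sm.LS (k := 0) hΓ).continuousOn).sub (Gam_cont hf1 hY))).sub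
      (continuousOn_const.mul ((hΓ.continuousOn.mul hY.continuousOn).mul hinv))).add
      (continuousOn_const.mul ((continuousOn_const.mul (Gam_cont hf1 hΓ1)).mul hinv))
  have i2 : Integrable (fun x => f x ^ (-N) * (Gam f f x * LS f x / f x
      + 2 * (1 / 2 * Gam f (Gam f f) x / f x) - (N + 1) * (Gam f f x / f x) ^ 2)) ν := by
    refine hν.integrable (hu.continuousOn.mul ?_)
    simp only [div_eq_mul_inv _ (f _)]
    exact (((hΓ.continuousOn.mul hY.continuousOn).mul hinv).add
      (continuousOn_const.mul ((continuousOn_const.mul (Gam_cont hf1 hΓ1)).mul hinv))).sub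
      (continuousOn_const.mul ((hΓ.continuousOn.mul hinv).pow 2))
  have key := integral_sub (i0.sub (i1.const_mul l)) (i2.const_mul μ)
  simp only [Pi.sub_apply] at key
  rw [integral_sub i0 (i1.const_mul l), integral_const_mul, integral_const_mul,
    identity_one hν hf hpos N, identity_two hν hf hpos N, mul_zero, mul_zero, sub_zero,
    sub_zero] at key
  rw [← key]
  refine integral_nonneg_of_ae ?_
  filter_upwards [hν.ae_ne] with x hx
  have hp := hpos x hx
  have hq := pointwise_sphere (by omega) hf hx (θ / f x)
  rw [← hm] at hq ⊢
  have hd2 : (d : ℝ) - 2 = m - 1 := by linarith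
  rw [hd2] at hq
  generalize (1 / 2 * LS (Gam f f) x - Gam f (LS f) x) = B at *
  generalize 1 / 2 * Gam f (Gam f f) x = X at *
  generalize LS f x = Y at *
  generalize Gam f f x = Γ at *
  have hup : 0 < f x ^ (-N) := Real.rpow_pos_of_pos hp _
  generalize f x ^ (-N) = u at *
  generalize f x = p at *
  have hrest : 0 ≤ ((N + 1) * μ - c * θ ^ 2 * (1 - 1 / m)) * (Γ / p) ^ 2 :=
    mul_nonneg (by linarith) (sq_nonneg _)
  have hsum := mul_nonneg hup.le (add_nonneg (mul_nonneg hc.le hq) hrest)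
  refine hsum.trans (le_of_eq ?_)
  have : N - 1 ≠ 0 := by linarith
  have : m ≠ 0 := by linarith
  have : m + 2 ≠ 0 := by linarith
  have := hp.ne'
  simp only [μ, θ, c, l]
  field_simp
  ring

end integral

/-! ### Wirtinger's inequality and the two-dimensional case -/

/-- Wirtinger's inequality for mean-zero `2π`-periodic functions, by comparing Fourier
coefficients. -/
lemma wirtinger {y y' : ℝ → ℝ} (hy : ∀ t, HasDerivAt y (y' t) t) (hc : Continuous y')
    (hper : y (2 * π) = y 0) (hmean : ∫ t in (0 : ℝ)..2 * π, y t = 0) :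
    ∫ t in (0 : ℝ)..2 * π, y t ^ 2 ≤ ∫ t in (0 : ℝ)..2 * π, y' t ^ 2 := by
  have hab : (0 : ℝ) < 2 * π := by positivity
  have hyc : Continuous y := continuous_iff_continuousAt.2 fun t => (hy t).continuousAt
  have mem (g : ℝ → ℝ) (hg : Continuous g) :
      MemLp (fun t => (g t : ℂ)) 2 (volume.restrict (Set.Ioc 0 (2 * π))) := by
    obtain ⟨C, hC⟩ := isCompact_Icc.exists_bound_of_continuousOn (s := Set.Icc 0 (2 * π))
      (f := fun t => (g t : ℂ)) (by fun_prop)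
    refine MemLp.of_bound (by fun_prop) C ?_
    filter_upwards [ae_restrict_mem measurableSet_Ioc] with t ht
    exact hC t (Set.Ioc_subset_Icc_self ht)
  have s1 := hasSum_sq_fourierCoeffOn hab (mem y hyc)
  have s2 := hasSum_sq_fourierCoeffOn hab (mem y' hc)
  have hle (n : ℤ) : ‖fourierCoeffOn hab (fun t => (y t : ℂ)) n‖ ^ 2
      ≤ ‖fourierCoeffOn hab (fun t => (y' t : ℂ)) n‖ ^ 2 := by
    by_cases hn : n = 0
    · subst hn
      have : fourierCoeffOn hab (fun t => (y t : ℂ)) 0 = 0 := by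
        rw [fourierCoeffOn_eq_integral]
        simp [intervalIntegral.integral_ofReal, hmean]
      rw [this]
      simp
    · have h := fourierCoeffOn_of_hasDerivAt hab hn (fun t _ => (hy t).ofReal_comp)
        ((Complex.continuous_ofReal.comp hc).intervalIntegrable 0 (2 * π))
      have hnorm : ‖fourierCoeffOn hab (fun t => (y t : ℂ)) n‖
          = |(n : ℝ)|⁻¹ * ‖fourierCoeffOn hab (fun t => (y' t : ℂ)) n‖ := by
        rw [h, hper]
        simp only [sub_self, mul_zero, zero_sub, norm_mul, norm_neg, norm_div]
        simp [abs_of_pos pi_pos]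
        field_simp
      rw [hnorm, mul_pow]
      have h1 : (1 : ℝ) ≤ |(n : ℝ)| := by
        exact_mod_cast Int.one_le_abs hn
      have h2 : (|(n : ℝ)|⁻¹) ^ 2 ≤ 1 := pow_le_one₀ (by positivity) (inv_le_one_of_one_le₀ h1)
      exact mul_le_of_le_one_left (sq_nonneg _) h2
  have h := hasSum_le hle s1 s2
  simp only [sub_zero, smul_eq_mul, Complex.norm_real, Real.norm_eq_abs, sq_abs] at h
  exact le_of_mul_le_mul_left h (by positivity)

section two
variable {f g : Euc 2 → ℝ} {x : Euc 2} {ν : Measure (Euc 2)}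

lemma Gam_two (f g : Euc 2 → ℝ) (x : Euc 2) : Gam f g x = RD (0, 1) f x * RD (0, 1) g x := by
  rw [Gam, Fintype.sum_prod_type]
  simp only [Fin.sum_univ_two, RD_apply]
  ring

lemma LS_two (hf : Sm 2 f) (hx : x ≠ 0) : LS f x = RD (0, 1) (RD (0, 1) f) x := by
  rw [LS, Fintype.sum_prod_type]
  simp only [Fin.sum_univ_two]
  have h0 := RD_RD_antisymm_left hf hx (0 : Fin 2) 0 0 0
  have h1 := RD_RD_antisymm_left hf hx (1 : Fin 2) 1 1 1
  rw [RD_RD_antisymm_left hf hx 0 1 1 0, RD_RD_antisymm_right hf hx 0 1 0 1]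
  linarith

lemma bochner_two (hf : Sm 3 f) (hx : x ≠ 0) :
    1 / 2 * LS (Gam f f) x - Gam f (LS f) x = LS f x ^ 2 := by
  have hf2 : Sm 2 f := hf.of_le (by norm_num)
  have z (i : Fin 2) (b : Fin 2 × Fin 2) : RD (i, i) (RD b f) x = 0 := by
    have := RD_RD_antisymm_left hf2 hx i i b.1 b.2
    simp only [Prod.mk.eta] at this
    linarith
  have z' (i : Fin 2) (b : Fin 2 × Fin 2) : RD b (RD (i, i) f) x = 0 := by
    have := RD_RD_antisymm_right hf2 hx b.1 b.2 i i
    simp only [Prod.mk.eta] at this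
    linarith
  rw [bochner_sphere hf hx, LS_two hf2 hx]
  simp only [Fintype.sum_prod_type, Fin.sum_univ_two, z, z', RD_RD_antisymm_left hf2 hx 0 1,
    RD_RD_antisymm_right hf2 hx _ _ 0 1]
  ring

/-- The spherical inequality for `d = 2`: Wirtinger's inequality for `f^{-N/2} ∂_θ f`, which has
mean zero on each circle because it is a derivative, combined with `identity_two`. -/
lemma sphere_ineq_two (hν : RadMeas ν) (hf : Sm 3 f) (hpos : ∀ x, x ≠ 0 → 0 < f x) {N : ℝ}
    (hN : 1 < N) :
    0 ≤ ∫ x, f x ^ (-N) * ((1 / 2 * LS (Gam f f) x - Gam f (LS f) x) - 1 / N * LS f x ^ 2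
      - (N - 1) / N * Gam f f x) ∂ν := by
  have hf2 : Sm 2 f := hf.of_le (by norm_num)
  have hf1 : Sm 1 f := hf.of_le (by norm_num)
  let v : Euc 2 → ℝ := fun x => f x ^ (-N / 2) * RD (0, 1) f x
  have hv : Sm 2 v := (hf2.rpow hpos _).mul (hf.RD _)
  have hv1 : Sm 1 v := hv.of_le (by norm_num)
  have hLv : Sm 1 (RD (0, 1) v) := hv.RD _
  have hinv : ContinuousOn (fun x => (f x)⁻¹) {(0 : Euc 2)}ᶜ :=
    hf.continuousOn.inv₀ fun x hx => (hpos x hx).ne'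
  have hu : Sm 1 fun x => f x ^ (-N) := hf1.rpow hpos _
  have hΓ : Sm 2 (Gam f f) := hf.Gam hf
  have hΓ1 : Sm 1 (Gam f f) := hΓ.of_le (by norm_num)
  have hY : Sm 1 (LS f) := Sm.LS (k := 1) hf
  have hcW : ContinuousOn (fun x => RD (0, 1) v x ^ 2 - v x ^ 2) {(0 : Euc 2)}ᶜ :=
    (hLv.pow 2).continuousOn.sub (hv.pow 2).continuousOn
  have hW : 0 ≤ ∫ x, (RD (0, 1) v x ^ 2 - v x ^ 2) ∂ν := by
    have h := hν.integral_orbit hcW (0, 1)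
    have h2 : 0 ≤ ∫ x, (∫ t in (0 : ℝ)..2 * π, (RD (0, 1) v (rot (0, 1) t x) ^ 2
        - v (rot (0, 1) t x) ^ 2)) ∂ν := by
      refine integral_nonneg_of_ae ?_
      filter_upwards [hν.ae_ne] with x hx
      have c1 := continuous_orbit hLv.continuousOn (0, 1) hx
      have c2 := continuous_orbit hv.continuousOn (0, 1) hx
      have c3 := continuous_orbit (hf.RD (0, 1)).continuousOn (0, 1) hx
      have c4 := continuous_orbit hf.continuousOn (0, 1) hx
      have hmean : ∫ t in (0 : ℝ)..2 * π, v (rot (0, 1) t x) = 0 := by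
        have := intervalIntegral.integral_comp_mul_deriv'' (a := 0) (b := 2 * π)
          (f := fun t => f (rot (0, 1) t x)) (f' := fun t => RD (0, 1) f (rot (0, 1) t x))
          (g := fun p => p ^ (-N / 2)) c4.continuousOn
          (fun t _ => (hasDerivAt_orbit hf1 (0, 1) t hx).hasDerivWithinAt) c3.continuousOn (by
            rintro p ⟨t, -, rfl⟩
            exact (Real.continuousAt_rpow_const _ _
              (Or.inl (hpos _ (rot_ne _ t hx)).ne')).continuousWithinAt)
        rw [rot_two_pi, intervalIntegral.integral_same] at this
        exact this
      have hw := wirtinger (fun t => hasDerivAt_orbit hv1 (0, 1) t hx) c1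
        (by rw [rot_two_pi]) hmean
      simp only [Pi.zero_apply]
      have hsub := intervalIntegral.integral_sub (μ := volume)
        ((c1.pow 2).intervalIntegrable 0 (2 * π)) ((c2.pow 2).intervalIntegrable 0 (2 * π))
      simp only [Pi.pow_apply] at hsub
      rw [hsub]
      linarith
    rw [h] at h2
    have hpi : 0 < 2 * π := by positivity
    exact nonneg_of_mul_nonneg_right h2 hpi
  have i2 : Integrable (fun x => f x ^ (-N) * (Gam f f x * LS f x / f x
      + 2 * (1 / 2 * Gam f (Gam f f) x / f x) - (N + 1) * (Gam f f x / f x) ^ 2)) ν := by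
    refine hν.integrable (hu.continuousOn.mul ?_)
    simp only [div_eq_mul_inv _ (f _)]
    exact (((hΓ.continuousOn.mul hY.continuousOn).mul hinv).add
      (continuousOn_const.mul ((continuousOn_const.mul (Gam_cont hf1 hΓ1)).mul hinv))).sub
      (continuousOn_const.mul ((hΓ.continuousOn.mul hinv).pow 2))
  -- The multiplier `N / 3` cancels the cross term `(∂_θ f)² ∂_θ² f / f` in the expansion of
  -- `(∂_θ v)²`.
  have i3 := (hν.integrable hcW).add (i2.const_mul (N / 3))
  have hN1 : 0 ≤ 1 - 1 / N := by
    rw [sub_nonneg, div_le_one (by linarith)]; linarith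
  have hsum : 0 ≤ (1 - 1 / N) * ∫ x, ((RD (0, 1) v x ^ 2 - v x ^ 2) + N / 3 *
      (f x ^ (-N) * (Gam f f x * LS f x / f x
      + 2 * (1 / 2 * Gam f (Gam f f) x / f x) - (N + 1) * (Gam f f x / f x) ^ 2))) ∂ν := by
    rw [integral_add (hν.integrable hcW) (i2.const_mul _), integral_const_mul,
      identity_two hν hf hpos N, mul_zero, add_zero]
    exact mul_nonneg hN1 hW
  refine hsum.trans ?_
  rw [← integral_const_mul]
  refine integral_mono_ae (i3.const_mul _)
    (hν.integrable (cont_bochner hf hpos N (1 / N) ((N - 1) / N))) ?_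
  filter_upwards [hν.ae_ne] with x hx
  have hp := hpos x hx
  have hLvx : RD (0, 1) v x = f x ^ (-N / 2) * (LS f x - N / 2 * (Gam f f x / f x)) := by
    have : RD (0, 1) v x = RD (0, 1) (fun x => f x ^ (-N / 2)) x * RD (0, 1) f x
        + f x ^ (-N / 2) * RD (0, 1) (RD (0, 1) f) x :=
      RD_mul (hf1.rpow hpos _) (hf2.RD _) _ hx
    rw [this, RD, LD_rpow hf1 le_rfl hpos _ hx, ← RD, LS_two hf2 hx, Gam_two,
      Real.rpow_sub_one hp.ne']
    ring
  have hvx : v x = f x ^ (-N / 2) * RD (0, 1) f x := rfl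
  have hsq : f x ^ (-N) = f x ^ (-N / 2) * f x ^ (-N / 2) := by
    rw [← Real.rpow_add hp]; congr 1; ring
  have hX : 1 / 2 * Gam f (Gam f f) x = Gam f f x * LS f x := by
    have h := RD_congr (fun y _ => Gam_two f f y) (0, 1) hx
    rw [Gam_two f (Gam f f), h, RD_mul (hf2.RD _) (hf2.RD _) _ hx, LS_two hf2 hx, Gam_two]
    ring
  rw [bochner_two hf hx, hX, hLvx, hvx, hsq]
  have hG : Gam f f x = RD (0, 1) f x ^ 2 := by rw [Gam_two, sq]
  have e : ∀ q Y D p : ℝ, p ≠ 0 → q * q * (Y ^ 2 - 1 / N * Y ^ 2 - (N - 1) / N * D ^ 2)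
      - (1 - 1 / N) * ((q * (Y - N / 2 * (D ^ 2 / p))) ^ 2 - (q * D) ^ 2 + N / 3 * (q * q *
        (D ^ 2 * Y / p + 2 * (D ^ 2 * Y / p) - (N + 1) * (D ^ 2 / p) ^ 2)))
      = (1 - 1 / N) * ((N ^ 2 / 12 + N / 3) * (q * (D ^ 2 / p)) ^ 2) := by
    intro q Y D p hp
    have : N ≠ 0 := by linarith
    field_simp
    ring
  have hfin := e (f x ^ (-N / 2)) (LS f x) (RD (0, 1) f x) (f x) hp.ne'
  have : 0 ≤ (1 - 1 / N) * ((N ^ 2 / 12 + N / 3)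
      * (f x ^ (-N / 2) * (RD (0, 1) f x ^ 2 / f x)) ^ 2) := by
    have : 0 ≤ N ^ 2 / 12 + N / 3 := by positivity
    positivity
  rw [hG]
  linarith

end two

/-- The spherical inequality in every dimension, with the critical constant. -/
lemma sphere_ineq {d : ℕ} {ν : Measure (Euc d)} {f : Euc d → ℝ} (hν : RadMeas ν) (hd : 2 ≤ d)
    (hf : Sm 3 f) (hpos : ∀ x, x ≠ 0 → 0 < f x) {N : ℝ} (hN : (d : ℝ) - 1 < N) :
    0 ≤ ∫ x, f x ^ (-N) * ((1 / 2 * LS (Gam f f) x - Gam f (LS f) x) - 1 / N * LS f x ^ 2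
      - (N - 1) * ((d : ℝ) - 1) / N * Gam f f x) ∂ν := by
  rcases hd.eq_or_lt with rfl | hd
  · norm_num at hN
    have h := sphere_ineq_two hν hf hpos hN
    have e : (N - 1) * (((2 : ℕ) : ℝ) - 1) / N = (N - 1) / N := by norm_num
    rw [e]
    exact h
  · exact sphere_ineq_three hν hd hf hpos hN

/-! ### Back to the cylinder -/

section final
variable {d : ℕ} {f : Euc d → ℝ} {x : Euc d}

/-- The inequality for integrals against a rotation-invariant measure: in the radial-angular
decomposition `bochK_eq` the first two terms are nonnegative pointwise, and the condition on `α`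
bounds the last one from below by the integrand of `sphere_ineq`. -/
lemma cylinder_ineq {ν : Measure (Euc d)} (hν : RadMeas ν) (hd : 2 ≤ d) (hf : Sm 3 f)
    (hpos : ∀ x, x ≠ 0 → 0 < f x) {N α : ℝ} (hN : (d : ℝ) - 1 < N)
    (hα : α ^ 2 ≤ ((d : ℝ) - 1) / N) :
    0 ≤ ∫ x, f x ^ (-N) * ((‖x‖ ^ 2) ^ 2 * bochK α (N + 1) f x) ∂ν := by
  have hd2 : (2 : ℝ) ≤ d := by exact_mod_cast hd
  have hN1 : 1 < N := by linarith
  have hf2 : Sm 2 f := hf.of_le (by norm_num)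
  have hf1 : Sm 1 f := hf.of_le (by norm_num)
  have hu : Sm 1 fun x => f x ^ (-N) := hf1.rpow hpos _
  have hT : Sm 2 (TD f) := hf.TD
  have hTT : Sm 1 (TD (TD f)) := hT.TD
  have hΓ : Sm 2 (Gam f f) := hf.Gam hf
  have hΓ1 : Sm 1 (Gam f f) := hΓ.of_le (by norm_num)
  have hY : Sm 1 (LS f) := Sm.LS (k := 1) hf
  have hT1 : Sm 1 (TD f) := hT.of_le (by norm_num)
  let D : Euc d → ℝ := fun x => N / (N + 1) * (α ^ 2 * (TD (TD f) x - 2 * TD f x)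
      - LS f x / N) ^ 2 + 2 * α ^ 2 * (Gam (TD f) (TD f) x - 2 * Gam f (TD f) x + Gam f f x)
  let S : Euc d → ℝ := fun x => (1 / 2 * LS (Gam f f) x - Gam f (LS f) x) - 1 / N * LS f x ^ 2
      - ((N - 1) * α ^ 2) * Gam f f x
  have hD : ContinuousOn D {(0 : Euc d)}ᶜ :=
    (continuousOn_const.mul (((continuousOn_const.mul (hTT.continuousOn.sub
      (continuousOn_const.mul hT.continuousOn))).sub (hY.continuousOn.div_const _)).pow 2)).add
    (continuousOn_const.mul (((Gam_cont hT1 hT1).sub (continuousOn_const.mul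
      (Gam_cont hf1 hT1))).add hΓ.continuousOn))
  have hS := hν.integrable (cont_bochner hf hpos N (1 / N) ((N - 1) * α ^ 2))
  have key (x : Euc d) (hx : x ≠ 0) : f x ^ (-N) * ((‖x‖ ^ 2) ^ 2 * bochK α (N + 1) f x)
      = f x ^ (-N) * D x + f x ^ (-N) * S x := by
    have hR : ‖x‖ ^ 2 ≠ 0 := (norm_sq_pos x hx).ne'
    rw [bochK_eq α (N + 1) (by linarith) (by linarith) hf hx]
    simp only [D, S, add_sub_cancel_right]
    field_simp
    ring
  have hDS : 0 ≤ ∫ x, (f x ^ (-N) * D x + f x ^ (-N) * S x) ∂ν := by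
    refine (sphere_ineq hν hd hf hpos hN).trans (integral_mono_ae
      (hν.integrable (cont_bochner hf hpos N (1 / N) ((N - 1) * ((d : ℝ) - 1) / N)))
      ((hν.integrable (hu.continuousOn.mul hD)).add hS) ?_)
    filter_upwards [hν.ae_ne] with x hx
    have hup : 0 < f x ^ (-N) := Real.rpow_pos_of_pos (hpos x hx) _
    have h1 : 0 ≤ D x := by
      have h2 : 0 ≤ Gam (TD f) (TD f) x - 2 * Gam f (TD f) x + Gam f f x :=
        Gam_sub_nonneg _ _ _
      have : 0 < N := by linarith
      positivity
    have h3 : (N - 1) * α ^ 2 * Gam f f x ≤ (N - 1) * ((d : ℝ) - 1) / N * Gam f f x := by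
      rw [mul_div_assoc]
      exact mul_le_mul_of_nonneg_right (mul_le_mul_of_nonneg_left hα (by linarith))
        (Gam_self_nonneg _ _)
    simp only [← mul_add]
    refine mul_le_mul_of_nonneg_left ?_ hup.le
    simp only [S]
    linarith
  refine hDS.trans (le_of_eq (integral_congr_ae ?_))
  filter_upwards [hν.ae_ne] with x hx using (key x hx).symm

/-- A function vanishing at the origin has nonnegative integral as soon as its integrals over all
annuli are nonnegative. If it is not integrable, its integral is `0` by convention. -/
lemma integral_nonneg_of_annulus {F : Euc d → ℝ} (h0 : F 0 = 0)
    (h : ∀ ε ρ : ℝ, 0 < ε → 0 ≤ ∫ x in annulus d ε ρ, F x) : 0 ≤ ∫ x, F x := by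
  by_cases hi : Integrable F
  · have hmono : Monotone fun k : ℕ => annulus d (1 / ((k : ℝ) + 1)) (k + 1) := by
      intro k l hkl x hx
      have hkl' : (k : ℝ) ≤ l := by exact_mod_cast hkl
      exact ⟨(one_div_le_one_div_of_le (by positivity) (by linarith)).trans hx.1,
        hx.2.trans (by linarith)⟩
    have hU : ⋃ k : ℕ, annulus d (1 / ((k : ℝ) + 1)) (k + 1) = {(0 : Euc d)}ᶜ := by
      refine Set.Subset.antisymm
        (Set.iUnion_subset fun k => annulus_subset (by positivity) _) fun x hx => ?_
      obtain ⟨k, hk⟩ := exists_nat_one_div_lt (norm_pos_iff.2 hx)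
      obtain ⟨l, hl⟩ := exists_nat_ge ‖x‖
      obtain ⟨m, hkm, hlm⟩ : ∃ m : ℕ, k ≤ m ∧ l ≤ m := ⟨max k l, le_max_left k l, le_max_right k l⟩
      have hk' : (k : ℝ) ≤ m := by exact_mod_cast hkm
      have hl' : (l : ℝ) ≤ m := by exact_mod_cast hlm
      refine Set.mem_iUnion.2 ⟨m, ?_, ?_⟩
      · exact (one_div_le_one_div_of_le (by positivity) (by linarith)).trans hk.le
      · linarith
    have ht := tendsto_setIntegral_of_monotone
      (fun k : ℕ => (isCompact_annulus (d := d) (1 / ((k : ℝ) + 1)) (k + 1)).measurableSet)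
      hmono (hi.integrableOn (s := ⋃ k : ℕ, annulus d (1 / ((k : ℝ) + 1)) (k + 1)))
    rw [hU, setIntegral_eq_integral_of_forall_compl_eq_zero (fun x hx => by
      have : x = 0 := by simpa using hx
      rw [this, h0])] at ht
    exact ge_of_tendsto' ht fun k => h _ _ (by positivity)
  · rw [integral_undef hi]

end final

/-- **Proposition (nonnegativity).** For `n > d ≥ 2`, `α ≤ √((d-1)/(n-1))`, any positive
`𝐩 ∈ C³((0,∞)×S^{d-1})`, any nonnegative `η ∈ C_c^∞(0,∞)` and any `s ≥ 0`,
`∫ 𝐩^{1-n} 𝐤[𝐩] η^s dμ ≥ 0`. -/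
theorem bochner_integral_nonneg (d : ℕ) (a b : ℝ) (P : Euc d → ℝ)
    (hadm : Admissible d a b)
    (hd : 2 ≤ d) (hnd : (d : ℝ) < nCKN d a b)
    (halpha : alphaCKN d a b ≤ Real.sqrt (((d : ℝ) - 1) / (nCKN d a b - 1)))
    (hP : ContDiffOn ℝ 3 P {(0 : Euc d)}ᶜ)
    (hPpos : ∀ x : Euc d, x ≠ 0 → 0 < P x)
    (η : ℝ → ℝ) (hη : IsCutoff η) (s : ℝ) (hs : 0 ≤ s) :
    0 ≤ cylIntegral (nCKN d a b) (fun x =>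
      P x ^ (1 - nCKN d a b) * bochK (alphaCKN d a b) (nCKN d a b) P x * η ‖x‖ ^ s) := by
  have hd2 : (2 : ℝ) ≤ d := by exact_mod_cast hd
  obtain ⟨hab, ha⟩ := hadm
  have hb1 : b ≤ a + 1 := by rcases hab with h | h <;> exact h.2.2
  -- `n > d` excludes the degenerate value `b = a + 1` and the value `b = a`.
  have hq : 0 < 1 + a - b := by
    refine lt_of_le_of_ne (by linarith) fun h => ?_
    rw [nCKN, ← h, div_zero] at hnd
    linarith
  have hba : a < b := by
    rw [nCKN, lt_div_iff₀ hq] at hnd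
    nlinarith
  have hα0 : 0 ≤ alphaCKN d a b := by
    have hac : 0 ≤ acrit d := by rw [acrit]; linarith
    exact div_nonneg (mul_nonneg hq.le (by linarith)) (by linarith)
  have hN0 : 0 < nCKN d a b - 1 := by linarith
  have hα2 : alphaCKN d a b ^ 2 ≤ ((d : ℝ) - 1) / (nCKN d a b - 1) := by
    have h := pow_le_pow_left₀ hα0 halpha 2
    rwa [Real.sq_sqrt (div_nonneg (by linarith) hN0.le)] at h
  obtain ⟨hηs, -, -, hη0⟩ := hη
  generalize alphaCKN d a b = α at *
  generalize nCKN d a b = n at *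
  have hf : Sm 3 P := hP
  refine integral_nonneg_of_annulus ?_ fun ε ρ hε => ?_
  -- The weight `|x|^(n-d)` vanishes at the origin because `n > d`.
  · rw [norm_zero, Real.zero_rpow (by linarith), mul_zero]
  -- The radial factors of the integrand, with the `r⁻⁴` of `bochK_eq`, form the density.
  let w : ℝ → ℝ := fun r => η r ^ s * r ^ (n - (d : ℝ)) * ((r ^ 2) ^ 2)⁻¹
  have hηc : Continuous η := hηs.continuous
  have hwm : Measurable w := by
    have := hηc.measurable
    fun_prop
  have hw0 (r : ℝ) (hr : 0 < r) : 0 ≤ w r := by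
    have := hη0 r
    positivity
  have hwc : ContinuousOn w (Set.Icc ε ρ) := by
    refine ((hηc.rpow_const fun _ => Or.inr hs).continuousOn.mul ?_).mul ?_
    · exact fun r hr => (Real.continuousAt_rpow_const _ _
        (Or.inl (hε.trans_le hr.1).ne')).continuousWithinAt
    · refine ContinuousOn.inv₀ (by fun_prop) fun r hr => ?_
      have := hε.trans_le hr.1
      positivity
  obtain ⟨C, hC⟩ := isCompact_Icc.exists_bound_of_continuousOn hwc
  have hν := radMeas_withDensity (d := d) hε hwm (ρ := ρ)
    fun r h1 h2 => (le_abs_self _).trans (hC r ⟨h1, h2⟩)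
  have h := cylinder_ineq hν hd hf hPpos (N := n - 1) (α := α) (by linarith) hα2
  rw [integral_radMeas hε hwm hw0] at h
  refine h.trans (le_of_eq (setIntegral_congr_fun (isCompact_annulus ε ρ).measurableSet
    fun x hx => ?_))
  have hx0 : ‖x‖ ≠ 0 := (hε.trans_le hx.1).ne'
  simp only [w, neg_sub, sub_add_cancel]
  field_simp
end
end
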